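/- arXiv:1412.6265 — 11 statements merged into one kernel-verified Lean document; each statement's English description precedes it below -/
import Mathlib

section
/- Generalized Sauer–Shelah Lemma (first inequality): Let X and Y be finite sets, let H ⊆ Y^X be a set of functions from X to Y, and let k be an integer with 2 ≤ k ≤ |Y|. Then |H| ≤ Σ_{i=0}^{Dim_k(H)} C(|X|, i) · (k−1)^{|X|−i} · C(|Y|, k)^i, where C(a,b) denotes the binomial coefficient. -/
open Finset

/-- `A` is `k`-shattered by `H ⊆ Y^X`: for every `a ∈ A` there is a set `Ya a ⊆ Y` of size `k`
such that every function on `A` taking values in the `Ya a`'s is a restriction of a member of `H`. -/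
def kShatters {X Y : Type*} (H : Finset (X → Y)) (k : ℕ) (A : Finset X) : Prop :=
  ∃ Ya : X → Finset Y, (∀ a ∈ A, (Ya a).card = k) ∧
    ∀ f : X → Y, (∀ a ∈ A, f a ∈ Ya a) → ∃ h ∈ H, ∀ a ∈ A, h a = f a

/-- The `k`-dimension of `H`: the maximal cardinality of a `k`-shattered subset of `X`. -/
noncomputable def kDim {X Y : Type*} (H : Finset (X → Y)) (k : ℕ) : ℕ :=
  sSup {d : ℕ | ∃ A : Finset X, kShatters H k A ∧ A.card = d}

theorem gss_arith (n m a c : ℕ) :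
    ∑ i ∈ Finset.range (m + 1), (n + 1).choose i * a ^ (n + 1 - i) * c ^ i =
      a * ∑ i ∈ Finset.range (m + 1), n.choose i * a ^ (n - i) * c ^ i +
      c * ∑ i ∈ Finset.range m, n.choose i * a ^ (n - i) * c ^ i := by
  rw [Finset.sum_range_succ', Finset.sum_range_succ' (fun i => n.choose i * a ^ (n - i) * c ^ i),
    mul_add, Finset.mul_sum, Finset.mul_sum, add_right_comm, ← Finset.sum_add_distrib]
  congr 1
  · apply Finset.sum_congr rfl
    intro i _
    rw [Nat.choose_succ_succ, Nat.add_sub_add_right]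
    by_cases h : i + 1 ≤ n
    · have : n - i = (n - (i + 1)) + 1 := by omega
      rw [this]; ring
    · rw [Nat.choose_eq_zero_of_lt (by omega : n < i + 1)]; ring
  · simp [pow_succ]; ring

theorem gss_choose (k s : ℕ) (hk : 1 ≤ k) : s ≤ (k - 1) + s.choose k := by
  induction s with
  | zero => simp
  | succ s ih =>
    by_cases h : s + 1 ≤ k - 1
    · omega
    · obtain ⟨j, rfl⟩ : ∃ j, k = j + 1 := ⟨k - 1, by omega⟩
      rw [Nat.choose_succ_succ]
      have : 0 < s.choose j := Nat.choose_pos (by omega)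
      simp only [Nat.succ_eq_add_one] at *
      omega

theorem gss_fin {Y : Type*} [Fintype Y] (k : ℕ) (hk : 2 ≤ k) (n : ℕ) :
    ∀ (m : ℕ) (H : Finset (Fin n → Y)), (∀ A, kShatters H k A → A.card < m) →
    H.card ≤ ∑ i ∈ Finset.range m,
      n.choose i * (k - 1) ^ (n - i) * ((Fintype.card Y).choose k) ^ i := by
  classical
  induction n with
  | zero =>
    intro m H hH
    rcases H.eq_empty_or_nonempty with rfl | ⟨h, hh⟩
    · simp
    have h0 := hH ∅ ⟨fun _ => ∅, by simp, fun f _ => ⟨h, hh, by simp⟩⟩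
    obtain ⟨m, rfl⟩ : ∃ j, m = j + 1 := ⟨m - 1, by simp at h0; omega⟩
    rw [Finset.sum_range_succ']
    have : H.card ≤ 1 := Finset.card_le_one_of_subsingleton H
    simp; omega
  | succ n ih =>
    intro m H hH
    rcases H.eq_empty_or_nonempty with rfl | ⟨h, hh⟩
    · simp
    have h0 := hH ∅ ⟨fun _ => ∅, by simp, fun f _ => ⟨h, hh, by simp⟩⟩
    obtain ⟨m, rfl⟩ : ∃ j, m = j + 1 := ⟨m - 1, by simp at h0; omega⟩
    rw [gss_arith]
    let S : (Fin n → Y) → Finset Y := fun g =>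
      Finset.univ.filter (fun y => (Fin.cons y g : Fin (n+1) → Y) ∈ H)
    let H0 : Finset (Fin n → Y) := H.image Fin.tail
    let HZ : Finset Y → Finset (Fin n → Y) := fun Z => H0.filter (fun g => Z ⊆ S g)
    have e1 : H.card ≤ ∑ g ∈ H0, (S g).card := by
      rw [Finset.card_eq_sum_card_fiberwise (f := Fin.tail) (t := H0)
        (fun x hx => Finset.mem_image_of_mem _ hx)]
      apply Finset.sum_le_sum
      intro g _
      apply Finset.card_le_card_of_injOn (fun f => f 0)
      · intro f hf
        simp only [Finset.coe_filter, Set.mem_setOf_eq] at hf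
        obtain ⟨hf, rfl⟩ := hf
        simp [S, hf]
      · intro f hf f' hf' hff
        simp only [Finset.coe_filter, Set.mem_setOf_eq] at hf hf'
        rw [← Fin.cons_self_tail f, ← Fin.cons_self_tail f', hf.2, hf'.2]
        simp only at hff
        rw [hff]
    have e2 : ∑ g ∈ H0, (S g).card ≤
        (k - 1) * H0.card + ∑ Z ∈ Finset.univ.powersetCard k, (HZ Z).card := by
      calc ∑ g ∈ H0, (S g).card ≤ ∑ g ∈ H0, ((k - 1) + (S g).card.choose k) :=
            Finset.sum_le_sum fun g _ => gss_choose k _ (by omega)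
        _ = (k - 1) * H0.card + ∑ g ∈ H0, (S g).card.choose k := by
            rw [Finset.sum_add_distrib]; simp [mul_comm]
        _ = _ := by
            congr 1
            have := Finset.sum_card_bipartiteAbove_eq_sum_card_bipartiteBelow
              (s := H0) (t := Finset.univ.powersetCard k) (fun g Z => Z ⊆ S g)
            refine Eq.trans (Finset.sum_congr rfl fun g hg => ?_) this
            rw [← Finset.card_powersetCard]
            congr 1
            ext Z
            simp [Finset.bipartiteAbove, Finset.mem_powersetCard, and_comm]
    have b0 := ih (m + 1) H0 (by
      rintro A ⟨Ya, h1, h2⟩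
      have := hH (A.map (Fin.succEmb n)) ⟨Fin.cons ∅ Ya, by simpa using h1, by
        intro f hf
        obtain ⟨g, hg, hg'⟩ := h2 (Fin.tail f) (by simpa [Fin.tail] using hf)
        obtain ⟨h, hh, rfl⟩ := Finset.mem_image.1 hg
        exact ⟨h, hh, by simpa [Fin.tail] using hg'⟩⟩
      simpa using this)
    have bZ : ∀ Z ∈ (Finset.univ : Finset Y).powersetCard k, (HZ Z).card ≤ _ := fun Z hZ =>
      ih m (HZ Z) (by
        rintro A ⟨Ya, h1, h2⟩
        have := hH (insert 0 (A.map (Fin.succEmb n))) ⟨Fin.cons Z Ya, by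
            simpa using ⟨(Finset.mem_powersetCard.1 hZ).2, h1⟩, by
          intro f hf
          simp only [Finset.forall_mem_insert, Finset.forall_mem_map] at hf ⊢
          obtain ⟨g, hg, hg'⟩ := h2 (Fin.tail f) (by simpa [Fin.tail] using hf.2)
          have hs := (Finset.mem_filter.1 hg).2 hf.1
          refine ⟨Fin.cons (f 0) g, (Finset.mem_filter.1 hs).2, ?_⟩
          simpa [Fin.tail] using hg'⟩
        rw [Finset.card_insert_of_notMem (by simp)] at this
        simpa using this)
    have e3 := Finset.sum_le_card_nsmul _ _ _ bZ
    rw [Finset.card_powersetCard, Finset.card_univ, smul_eq_mul] at e3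
    have e4 := Nat.mul_le_mul_left (k - 1) b0
    omega

/-- Generalized Sauer–Shelah Lemma, first inequality. -/
theorem generalized_sauer_shelah_first {X Y : Type*} [Fintype X] [Fintype Y]
    (H : Finset (X → Y)) (k : ℕ) (hk : 2 ≤ k) (hkY : k ≤ Fintype.card Y) :
    H.card ≤ ∑ i ∈ Finset.range (kDim H k + 1),
      (Fintype.card X).choose i * (k - 1) ^ (Fintype.card X - i) *
        ((Fintype.card Y).choose k) ^ i := by
  classical
  let e := Fintype.equivFin X
  have := gss_fin (Y := Y) k hk (Fintype.card X) (kDim H k + 1)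
    (H.map (e.arrowCongr (Equiv.refl Y)).toEmbedding) (by
      rintro A ⟨Ya, h1, h2⟩
      rw [Nat.lt_succ_iff]
      apply le_csSup
      · refine ⟨Fintype.card X, ?_⟩
        rintro d ⟨B, _, rfl⟩
        exact Finset.card_le_univ B
      · refine ⟨A.map e.symm.toEmbedding, ⟨fun x => Ya (e x), by simpa using fun a ha => h1 (e a) ha, ?_⟩, by simp⟩
        intro f hf
        obtain ⟨g, hg, hg'⟩ := h2 (fun i => f (e.symm i)) (fun a ha => by
          simpa using hf (e.symm a) (Finset.mem_map_of_mem _ ha))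
        obtain ⟨h, hh, rfl⟩ := Finset.mem_map.1 hg
        exact ⟨h, hh, by simpa using fun a ha => by simpa using hg' (e a) ha⟩)
  simpa using this
end

section
/- Generalized Sauer–Shelah Lemma (second inequality): Let X and Y be finite sets, let H ⊆ Y^X be a set of functions from X to Y, and let k be an integer with 2 ≤ k ≤ |Y|. Then |H| ≤ |X|^{Dim_k(H)} · |Y|^{k·Dim_k(H)} · (k−1)^{|X|}. -/
open Finset

lemma gss_choose_s1 (j m : ℕ) : m ≤ j + m.choose (j + 1) := by
  induction m with
  | zero => omega
  | succ m ih =>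
    rw [Nat.choose_succ_succ, Nat.succ_eq_add_one]
    by_cases h : j ≤ m
    · have := Nat.choose_pos h
      omega
    · omega

open Classical in
lemma gss_trivial {X Y : Type*} [Fintype X] [Fintype Y] (c : X → Y) (T : Finset X)
    (H : Finset (X → Y)) (hc : ∀ h ∈ H, ∀ x, x ∉ T → h x = c x) :
    H.card ≤ Fintype.card Y ^ T.card := by
  have h1 : H.card ≤ (Finset.univ : Finset (T → Y)).card := by
    apply Finset.card_le_card_of_injOn (fun h (t : T) => h t) (by simp)
    intro h hh g hg e
    funext x
    by_cases hx : x ∈ T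
    · exact congrFun e ⟨x, hx⟩
    · rw [hc h hh x hx, hc g hg x hx]
  simpa using h1

open Classical in
lemma gss_step {X Y : Type*} [Fintype X] [Fintype Y] (H : Finset (X → Y)) (j : ℕ)
    (x : X) (y0 : Y) (H' : Finset (X → Y))
    (hH' : H' = H.image (fun h => Function.update h x y0)) :
    H.card ≤ j * H'.card + ∑ S ∈ (Finset.univ : Finset Y).powersetCard (j + 1),
      (H'.filter (fun g => ∀ y ∈ S, Function.update g x y ∈ H)).card := by
  have h1 : H.card ≤ ∑ g ∈ H', (univ.filter (fun y => Function.update g x y ∈ H)).card := by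
    rw [Finset.card_eq_sum_card_fiberwise (f := fun h => Function.update h x y0) (t := H')]
    · apply Finset.sum_le_sum
      intro g hg
      apply Finset.card_le_card_of_injOn (fun h => h x)
      · intro h hh
        simp only [coe_filter, Set.mem_ofPred_eq] at hh
        obtain ⟨hh, rfl⟩ := hh
        simpa using hh
      · intro h hh h' hh' e
        simp only [coe_filter, Set.mem_ofPred_eq] at hh hh'
        have e2 := hh.2.trans hh'.2.symm
        funext z
        by_cases hz : z = x
        · subst hz; exact e
        · have := congrFun e2 z
          simpa [hz] using this
    · intro h hh
      rw [hH']
      exact Finset.mem_coe.2 (Finset.mem_image_of_mem _ hh)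
  have h2 : ∑ S ∈ (Finset.univ : Finset Y).powersetCard (j + 1),
      (H'.filter (fun g => ∀ y ∈ S, Function.update g x y ∈ H)).card
      = ∑ g ∈ H', ((univ.filter (fun y => Function.update g x y ∈ H)).card).choose (j + 1) := by
    have := Finset.sum_card_bipartiteAbove_eq_sum_card_bipartiteBelow
      (s := (Finset.univ : Finset Y).powersetCard (j + 1)) (t := H')
      (fun S g => ∀ y ∈ S, Function.update g x y ∈ H)
    unfold Finset.bipartiteAbove Finset.bipartiteBelow at this
    rw [this]
    apply Finset.sum_congr rfl
    intro g _
    rw [← Finset.card_powersetCard]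
    congr 1
    ext S
    simp only [mem_filter, mem_powersetCard, subset_univ, true_and, Finset.subset_iff, mem_univ]
    tauto
  rw [h2]
  refine h1.trans ?_
  rw [mul_comm, ← smul_eq_mul, ← Finset.sum_const, ← Finset.sum_add_distrib]
  exact Finset.sum_le_sum fun g _ => gss_choose_s1 _ _

open Classical in
lemma gss_main {X Y : Type*} [Fintype X] [Fintype Y] (c : X → Y) (j : ℕ) (hj : 1 ≤ j)
    (hY : 1 ≤ Fintype.card Y) (T : Finset X) :
    ∀ (H : Finset (X → Y)) (d : ℕ), (∀ h ∈ H, ∀ x, x ∉ T → h x = c x) →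
      (∀ A ⊆ T, kShatters H (j + 1) A → A.card ≤ d) → d ≤ T.card →
      H.card ≤ T.card ^ d * (Fintype.card Y ^ (j + 1)) ^ d * j ^ T.card := by
  have triv : ∀ (T : Finset X) (H : Finset (X → Y)), (∀ h ∈ H, ∀ x, x ∉ T → h x = c x) →
      H.card ≤ T.card ^ T.card * (Fintype.card Y ^ (j + 1)) ^ T.card * j ^ T.card := by
    intro T H hc
    refine (gss_trivial c T H hc).trans ?_
    have a1 : 1 ≤ T.card ^ T.card := Nat.pow_self_pos
    have a2 : 1 ≤ j ^ T.card := Nat.one_le_pow _ _ hj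
    have a3 : Fintype.card Y ^ T.card ≤ (Fintype.card Y ^ (j + 1)) ^ T.card :=
      Nat.pow_le_pow_left (Nat.le_self_pow (by omega) _) _
    calc Fintype.card Y ^ T.card = 1 * Fintype.card Y ^ T.card * 1 := by ring
      _ ≤ _ := by gcongr
  induction T using Finset.induction_on with
  | empty =>
    intro H d hc _ hd
    have : d = (∅ : Finset X).card := by simpa using hd
    rw [this]
    exact triv _ _ hc
  | insert x T hx ih =>
    intro H d hc hs hd
    by_cases hdn : d = (insert x T).card
    · rw [hdn]; exact triv _ _ hc
    have hcard := Finset.card_insert_of_notMem hx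
    have hdT : d ≤ T.card := by omega
    have key := gss_step H j x (c x) _ rfl
    set H' := H.image (fun h => Function.update h x (c x)) with hH'
    have hc' : ∀ h ∈ H', ∀ z, z ∉ T → h z = c z := by
      intro h hh z hz
      obtain ⟨g, hg, rfl⟩ := Finset.mem_image.1 hh
      by_cases hzx : z = x
      · subst hzx; simp
      · simp only [Function.update_of_ne hzx]
        exact hc g hg z (by simp [hzx, hz])
    have b1 := ih H' d hc' (by
      rintro A hA ⟨Ya, h1, h2⟩
      refine hs A (hA.trans (Finset.subset_insert _ _)) ⟨Ya, h1, fun f hf => ?_⟩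
      obtain ⟨h, hh, he⟩ := h2 f hf
      obtain ⟨g, hg, rfl⟩ := Finset.mem_image.1 hh
      refine ⟨g, hg, fun a ha => ?_⟩
      rw [← he a ha, Function.update_of_ne]
      rintro rfl
      exact hx (hA ha)) hdT
    have sh : ∀ S ∈ (Finset.univ : Finset Y).powersetCard (j + 1), ∀ A ⊆ T,
        kShatters (H'.filter (fun g => ∀ y ∈ S, Function.update g x y ∈ H)) (j + 1) A →
        A.card + 1 ≤ d := by
      rintro S hS A hA ⟨Ya, h1, h2⟩
      have hxA : x ∉ A := fun h => hx (hA h)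
      have ne : ∀ a ∈ A, a ≠ x := by rintro a ha rfl; exact hxA ha
      rw [← Finset.card_insert_of_notMem hxA]
      refine hs _ (Finset.insert_subset_insert _ hA) ⟨Function.update Ya x S, ?_, ?_⟩
      · intro a ha
        rcases Finset.mem_insert.1 ha with rfl | ha
        · simpa using (Finset.mem_powersetCard.1 hS).2
        · rw [Function.update_of_ne (ne a ha)]; exact h1 a ha
      · intro f hf
        obtain ⟨g, hg, he⟩ := h2 f (fun a ha => by
          have := hf a (Finset.mem_insert_of_mem ha)
          rwa [Function.update_of_ne (ne a ha)] at this)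
        have hfx := hf x (Finset.mem_insert_self _ _)
        rw [Function.update_self] at hfx
        refine ⟨_, (Finset.mem_filter.1 hg).2 (f x) hfx, ?_⟩
        intro a ha
        rcases Finset.mem_insert.1 ha with rfl | ha
        · simp
        · rw [Function.update_of_ne (ne a ha)]; exact he a ha
    rw [hcard]
    set n := T.card
    set M := Fintype.card Y ^ (j + 1) with hM
    cases d with
    | zero =>
      have z : ∑ S ∈ (Finset.univ : Finset Y).powersetCard (j + 1),
          (H'.filter (fun g => ∀ y ∈ S, Function.update g x y ∈ H)).card = 0 := by
        apply Finset.sum_eq_zero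
        intro S hS
        rw [Finset.card_eq_zero]
        by_contra hne
        obtain ⟨g, hg⟩ := Finset.nonempty_iff_ne_empty.2 hne
        have hS' := (Finset.mem_powersetCard.1 hS).2
        have := sh S hS ∅ (by simp) ⟨fun _ => S, by simp, fun f _ => ⟨g, hg, by simp⟩⟩
        omega
      rw [z] at key
      simp only [pow_zero, one_mul, mul_one, add_zero] at b1 key ⊢
      calc H.card ≤ j * H'.card := key
        _ ≤ j * j ^ n := by gcongr
        _ = _ := by ring
    | succ e =>
      have b2 : ∑ S ∈ (Finset.univ : Finset Y).powersetCard (j + 1),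
          (H'.filter (fun g => ∀ y ∈ S, Function.update g x y ∈ H)).card
          ≤ M * (n ^ e * M ^ e * j ^ n) := by
        refine (Finset.sum_le_card_nsmul _ _ (n ^ e * M ^ e * j ^ n) ?_).trans ?_
        · intro S hS
          refine ih _ e (fun h hh => hc' h (Finset.mem_filter.1 hh).1) ?_ (by omega)
          intro A hA hAs
          have := sh S hS A hA hAs
          omega
        · rw [Finset.card_powersetCard, smul_eq_mul, Finset.card_univ]
          exact Nat.mul_le_mul_right _ (Nat.choose_le_pow _ _)
      calc H.card ≤ j * (n ^ (e + 1) * M ^ (e + 1) * j ^ n) + M * (n ^ e * M ^ e * j ^ n) :=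
            key.trans (by gcongr)
        _ ≤ j * (n ^ (e + 1) * M ^ (e + 1) * j ^ n) + j * (M * (n ^ e * M ^ e * j ^ n)) := by
            exact Nat.add_le_add_left (Nat.le_mul_of_pos_left _ hj) _
        _ = ((n + 1) * n ^ e) * M ^ (e + 1) * j ^ (n + 1) := by ring
        _ ≤ ((n + 1) * (n + 1) ^ e) * M ^ (e + 1) * j ^ (n + 1) := by gcongr; omega
        _ = _ := by ring

/-- Generalized Sauer–Shelah Lemma, second inequality. -/
theorem generalized_sauer_shelah_second {X Y : Type*} [Fintype X] [Fintype Y]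
    (H : Finset (X → Y)) (k : ℕ) (hk : 2 ≤ k) (hkY : k ≤ Fintype.card Y) :
    H.card ≤ (Fintype.card X) ^ (kDim H k) * (Fintype.card Y) ^ (k * kDim H k) *
      (k - 1) ^ (Fintype.card X) := by
  obtain ⟨j, rfl⟩ : ∃ j, k = j + 1 := ⟨k - 1, by omega⟩
  have : Nonempty Y := Fintype.card_pos_iff.1 (by omega)
  have hbdd : ∀ d ∈ {d : ℕ | ∃ A : Finset X, kShatters H (j + 1) A ∧ A.card = d},
      d ≤ Fintype.card X := by
    rintro d ⟨A, _, rfl⟩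
    exact Finset.card_le_univ A
  have := gss_main (fun _ : X => Classical.arbitrary Y) j (by omega) (by omega) Finset.univ H
    (kDim H (j + 1)) (by simp)
    (fun A _ hA => le_csSup ⟨_, hbdd⟩ ⟨A, hA, rfl⟩)
    (by
      rw [Finset.card_univ]
      unfold kDim
      rcases Set.eq_empty_or_nonempty
        {d : ℕ | ∃ A : Finset X, kShatters H (j + 1) A ∧ A.card = d} with h | h
      · rw [h]; simp
      · exact csSup_le h hbdd)
  rw [Finset.card_univ] at this
  rw [pow_mul]
  exact this
end

section
/- Recursive inequality for the maximal size of classes of bounded k-dimension: For all integers n ≥ k ≥ 2 and m > d > 0, M_{n,k}(d, m) ≤ (k−1) · M_{n,k}(d, m−1) + C(n, k) · M_{n,k}(d−1, m−1), where C(n,k) is the binomial coefficient. -/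
open Finset

/-- `M_{n,k}(d,m)`: the maximal cardinality of a class `H ⊆ [n]^{[m]}` with `k`-dimension at
most `d`. -/
noncomputable def Mnk (n k d m : ℕ) : ℕ :=
  sSup {c : ℕ | ∃ H : Finset (Fin m → Fin n), kDim H k ≤ d ∧ H.card = c}

theorem kDim_le_iff {X Y : Type*} [Fintype X] (H : Finset (X → Y)) (k d : ℕ) :
    kDim H k ≤ d ↔ ∀ A : Finset X, kShatters H k A → A.card ≤ d := by
  unfold kDim
  constructor
  · intro h A hA
    refine le_trans (le_csSup ?_ (show A.card ∈ {d : ℕ | ∃ A : Finset X, kShatters H k A ∧ A.card = d} from ⟨A, hA, rfl⟩)) h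
    refine ⟨Fintype.card X, ?_⟩
    rintro c ⟨B, -, rfl⟩
    exact Finset.card_le_univ B
  · intro h
    rcases Set.eq_empty_or_nonempty {d : ℕ | ∃ A : Finset X, kShatters H k A ∧ A.card = d} with h0 | h0
    · rw [h0]; simp
    · apply csSup_le h0
      rintro c ⟨A, hA, rfl⟩
      exact h A hA

theorem card_le_Mnk {n k d m : ℕ} (H : Finset (Fin m → Fin n)) (h : kDim H k ≤ d) :
    H.card ≤ Mnk n k d m := by
  unfold Mnk
  refine le_csSup ⟨Fintype.card (Fin m → Fin n), ?_⟩ ⟨H, h, rfl⟩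
  rintro c ⟨B, -, rfl⟩
  exact Finset.card_le_univ B

theorem le_choose_aux (k f : ℕ) (hk : 1 ≤ k) : f ≤ (k - 1) + f.choose k := by
  induction f with
  | zero => simp
  | succ f ih =>
    obtain ⟨j, rfl⟩ : ∃ j, k = j + 1 := ⟨k - 1, by omega⟩
    rw [Nat.choose_succ_succ]
    rcases Nat.lt_or_ge f j with h | h
    · omega
    · have := Nat.choose_pos h
      simp only [Nat.succ_eq_add_one] at *
      omega

theorem card_rec_aux {n k d m : ℕ} (hk : 2 ≤ k) (hkn : k ≤ n) (hd : 0 < d)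
    (H : Finset (Fin (m + 1) → Fin n)) (hH : kDim H k ≤ d) :
    H.card ≤ (k - 1) * Mnk n k d m + n.choose k * Mnk n k (d - 1) m := by
  classical
  rw [kDim_le_iff] at hH
  let P : Finset (Fin m → Fin n) := H.image Fin.tail
  let F : (Fin m → Fin n) → Finset (Fin n) := fun g => univ.filter fun y => Fin.cons y g ∈ H
  let HS : Finset (Fin n) → Finset (Fin m → Fin n) := fun S => P.filter fun g => S ⊆ F g
  have hF : ∀ g y, y ∈ F g ↔ (Fin.cons y g : Fin (m + 1) → Fin n) ∈ H := by
    intro g y; simp [F]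
  have hP : P.card ≤ Mnk n k d m := by
    apply card_le_Mnk
    rw [kDim_le_iff]
    rintro A ⟨Ya, hc, hf⟩
    rw [← Finset.card_map (Fin.succEmb m)]
    apply hH
    refine ⟨fun i => Fin.cases ∅ Ya i, ?_, ?_⟩
    · intro a ha
      obtain ⟨b, hb, rfl⟩ := Finset.mem_map.1 ha
      simpa using hc b hb
    · intro f hfa
      obtain ⟨h, hh, he⟩ := hf (Fin.tail f) (by
        intro a ha
        simpa [Fin.tail] using hfa a.succ (Finset.mem_map.2 ⟨a, ha, rfl⟩))
      obtain ⟨h', hh', rfl⟩ := Finset.mem_image.1 hh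
      refine ⟨h', hh', ?_⟩
      intro a ha
      obtain ⟨b, hb, rfl⟩ := Finset.mem_map.1 ha
      exact he b hb
  have hS : ∀ S ∈ powersetCard k (univ : Finset (Fin n)), (HS S).card ≤ Mnk n k (d - 1) m := by
    intro S hS
    have hSk := (Finset.mem_powersetCard.1 hS).2
    apply card_le_Mnk
    rw [kDim_le_iff]
    rintro A ⟨Ya, hc, hf⟩
    have key : (insert 0 (A.map (Fin.succEmb m))).card ≤ d := by
      apply hH
      refine ⟨fun i => Fin.cases S Ya i, ?_, ?_⟩
      · intro a ha
        rcases Finset.mem_insert.1 ha with rfl | ha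
        · simpa using hSk
        · obtain ⟨b, hb, rfl⟩ := Finset.mem_map.1 ha
          simpa using hc b hb
      · intro f hfa
        obtain ⟨h, hh, he⟩ := hf (Fin.tail f) (by
          intro a ha
          simpa [Fin.tail] using hfa a.succ (Finset.mem_insert_of_mem (Finset.mem_map.2 ⟨a, ha, rfl⟩)))
        have h0 : f 0 ∈ S := by simpa using hfa 0 (Finset.mem_insert_self _ _)
        have hsub := (Finset.mem_filter.1 hh).2
        refine ⟨Fin.cons (f 0) h, (hF _ _).1 (hsub h0), ?_⟩
        intro a ha
        rcases Finset.mem_insert.1 ha with rfl | ha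
        · simp
        · obtain ⟨b, hb, rfl⟩ := Finset.mem_map.1 ha
          simpa [Fin.tail] using he b hb
    rw [Finset.card_insert_of_notMem (by simp), Finset.card_map] at key
    omega
  have h1 : H.card = ∑ g ∈ P, (F g).card := by
    rw [Finset.card_eq_sum_card_image Fin.tail H]
    refine Finset.sum_congr rfl fun g _ => ?_
    refine Finset.card_bij' (fun h _ => h 0) (fun y _ => Fin.cons y g) ?_ ?_ ?_ ?_
    · intro h hh
      obtain ⟨hh1, rfl⟩ := Finset.mem_filter.1 hh
      rw [hF, Fin.cons_self_tail]; exact hh1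
    · intro y hy
      exact Finset.mem_filter.2 ⟨(hF _ _).1 hy, Fin.tail_cons _ _⟩
    · intro h hh
      obtain ⟨hh1, rfl⟩ := Finset.mem_filter.1 hh
      exact Fin.cons_self_tail h
    · intro y hy
      rfl
  have h2 : ∑ g ∈ P, (F g).card.choose k =
      ∑ S ∈ powersetCard k (univ : Finset (Fin n)), (HS S).card := by
    have : ∀ g ∈ P, (F g).card.choose k =
        ((powersetCard k (univ : Finset (Fin n))).filter fun S => S ⊆ F g).card := by
      intro g _
      rw [← Finset.card_powersetCard]
      congr 1
      ext S
      simp only [Finset.mem_powersetCard, Finset.mem_filter, Finset.subset_univ, true_and]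
      exact and_comm
    rw [Finset.sum_congr rfl this]
    exact Finset.sum_card_bipartiteAbove_eq_sum_card_bipartiteBelow (fun g S => S ⊆ F g)
  calc H.card = ∑ g ∈ P, (F g).card := h1
    _ ≤ ∑ g ∈ P, ((k - 1) + (F g).card.choose k) :=
        Finset.sum_le_sum fun g _ => le_choose_aux _ _ (by omega)
    _ = (k - 1) * P.card + ∑ S ∈ powersetCard k (univ : Finset (Fin n)), (HS S).card := by
        rw [Finset.sum_add_distrib, h2, Finset.sum_const, smul_eq_mul, mul_comm]
    _ ≤ (k - 1) * Mnk n k d m + n.choose k * Mnk n k (d - 1) m := by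
        refine Nat.add_le_add (Nat.mul_le_mul_left _ hP) ?_
        refine (Finset.sum_le_card_nsmul _ _ _ hS).trans ?_
        simp

/-- Recursive inequality for `M_{n,k}(d,m)`. -/
theorem Mnk_recursive (n k d m : ℕ) (hk : 2 ≤ k) (hkn : k ≤ n) (hd : 0 < d) (hdm : d < m) :
    Mnk n k d m ≤ (k - 1) * Mnk n k d (m - 1) + n.choose k * Mnk n k (d - 1) (m - 1) := by
  obtain ⟨m, rfl⟩ : ∃ j, m = j + 1 := ⟨m - 1, by omega⟩
  rw [Nat.add_sub_cancel]
  conv_lhs => unfold Mnk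
  rcases Set.eq_empty_or_nonempty
    {c : ℕ | ∃ H : Finset (Fin (m + 1) → Fin n), kDim H k ≤ d ∧ H.card = c} with h0 | h0
  · rw [h0]; simp
  · apply csSup_le h0
    rintro c ⟨H, hH, rfl⟩
    exact card_rec_aux hk hkn hd H hH
end

section
/- Closed-form bound for the Sauer–Shelah recursion: Let n ≥ k ≥ 2 be integers and define numbers N_{n,k}(d, m) for m ≥ d ≥ 0 by the initial conditions N_{n,k}(m, m) = n^m and N_{n,k}(0, m) = (k−1)^m, and the recursion N_{n,k}(d, m) = (k−1)·N_{n,k}(d, m−1) + C(n,k)·N_{n,k}(d−1, m−1) for m > d > 0. Then for every m ≥ d ≥ 1, N_{n,k}(d, m) ≤ Σ_{i=0}^{d} C(m, i) · (k−1)^{m−i} · C(n, k)^i. -/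
open Finset

theorem sauer_choose_aux (k : ℕ) (hk : 1 ≤ k) (n : ℕ) (h : k ≤ n) :
    n + 1 ≤ n.choose k + k := by
  induction n, h using Nat.le_induction with
  | base => simp [add_comm]
  | succ n hn ih =>
    obtain ⟨j, rfl⟩ : ∃ j, k = j + 1 := ⟨k - 1, by omega⟩
    rw [Nat.choose_succ_succ]
    have : 0 < n.choose j := Nat.choose_pos (by omega)
    simp only [Nat.succ_eq_add_one] at *
    omega

theorem sauer_sum_aux (a c e m : ℕ) (h : e + 1 ≤ m) :
    ∑ i ∈ Finset.range (e + 1 + 1), (m + 1).choose i * a ^ (m + 1 - i) * c ^ i =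
      a * ∑ i ∈ Finset.range (e + 1 + 1), m.choose i * a ^ (m - i) * c ^ i +
      c * ∑ i ∈ Finset.range (e + 1), m.choose i * a ^ (m - i) * c ^ i := by
  rw [Finset.sum_range_succ', Finset.sum_range_succ' _ (e + 1), mul_add, Finset.mul_sum,
    Finset.mul_sum, add_right_comm, ← Finset.sum_add_distrib]
  congr 1
  · refine Finset.sum_congr rfl fun i hi => ?_
    rw [Finset.mem_range] at hi
    obtain ⟨r, rfl⟩ : ∃ r, m = i + 1 + r := ⟨m - (i + 1), by omega⟩
    have e1 : i + 1 + r + 1 - (i + 1) = r + 1 := by omega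
    have e2 : i + 1 + r - (i + 1) = r := by omega
    have e3 : i + 1 + r - i = r + 1 := by omega
    rw [e1, e2, e3, Nat.choose_succ_succ (i + 1 + r) i]
    simp only [Nat.succ_eq_add_one]
    ring
  · simp [pow_succ, mul_comm]

/-- Closed-form bound for the Sauer–Shelah recursion: any family of numbers `N d m`
satisfying the initial conditions `N m m = n ^ m`, `N 0 m = (k-1) ^ m` and the recursion
`N d m = (k-1) * N d (m-1) + C(n,k) * N (d-1) (m-1)` for `m > d > 0` satisfies
`N d m ≤ ∑_{i=0}^{d} C(m,i) * (k-1)^(m-i) * C(n,k)^i` for all `m ≥ d ≥ 1`. -/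
theorem sauer_recursion_closed_form (n k : ℕ) (hk : 2 ≤ k) (hkn : k ≤ n)
    (N : ℕ → ℕ → ℕ)
    (hdiag : ∀ m : ℕ, N m m = n ^ m)
    (hzero : ∀ m : ℕ, N 0 m = (k - 1) ^ m)
    (hrec : ∀ d m : ℕ, 0 < d → d < m →
      N d m = (k - 1) * N d (m - 1) + n.choose k * N (d - 1) (m - 1)) :
    ∀ d m : ℕ, 1 ≤ d → d ≤ m →
      N d m ≤ ∑ i ∈ Finset.range (d + 1), m.choose i * (k - 1) ^ (m - i) * (n.choose k) ^ i := by
  have key : ∀ m d : ℕ, d ≤ m →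
      N d m ≤ ∑ i ∈ Finset.range (d + 1), m.choose i * (k - 1) ^ (m - i) * (n.choose k) ^ i := by
    intro m
    induction m with
    | zero =>
      intro d hd
      obtain rfl : d = 0 := by omega
      simp [hdiag]
    | succ m ih =>
      intro d hd
      rcases Nat.eq_zero_or_pos d with rfl | hpos
      · simp [hzero]
      rcases Nat.eq_or_lt_of_le hd with rfl | hlt
      · rw [hdiag]
        have h1 : n ≤ n.choose k + (k - 1) := by
          have := sauer_choose_aux k (by omega) n hkn
          omega
        refine (Nat.pow_le_pow_left h1 _).trans (le_of_eq ?_)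
        rw [add_pow]
        exact Finset.sum_congr rfl fun i _ => by simp; ring
      · obtain ⟨e, rfl⟩ : ∃ e, d = e + 1 := ⟨d - 1, by omega⟩
        rw [hrec _ _ hpos hlt, sauer_sum_aux (k - 1) (n.choose k) e m (by omega)]
        simp only [Nat.add_sub_cancel]
        exact Nat.add_le_add (Nat.mul_le_mul_left _ (ih _ (by omega)))
          (Nat.mul_le_mul_left _ (ih _ (by omega)))
  exact fun d m _ h => key m d h
end

section
/- From a k-shattered set to a fully shattered pair via pigeonhole: Let X and Y be finite sets with |Y| = n, let H ⊆ Y^X, let k be an integer with 2 ≤ k ≤ n, and suppose T ⊆ X is k-shattered by H. Then there exist a subset S ⊆ T with |S| ≥ |T|/C(n, k) and a subset A ⊆ Y with |A| = k such that every function g : S → A is the restriction to S of some function in H. -/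
open Finset

/-- From a `k`-shattered set to a fully shattered pair via pigeonhole. -/
theorem shattered_pair_of_kShattered {X Y : Type*} [Fintype X] [Fintype Y]
    (H : Finset (X → Y)) (k : ℕ) (hk : 2 ≤ k) (hkn : k ≤ Fintype.card Y)
    (T : Finset X) (hT : kShatters H k T) :
    ∃ (S : Finset X) (A : Finset Y), S ⊆ T ∧ A.card = k ∧
      (T.card : ℝ) / ((Fintype.card Y).choose k : ℝ) ≤ (S.card : ℝ) ∧
      ∀ g : X → Y, (∀ x ∈ S, g x ∈ A) → ∃ h ∈ H, ∀ x ∈ S, h x = g x := by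
  classical
  obtain ⟨Ya, hc, hs⟩ := hT
  have hpos : 0 < (Fintype.card Y).choose k := Nat.choose_pos hkn
  have hcard : ((univ : Finset Y).powersetCard k).card = (Fintype.card Y).choose k := by
    rw [card_powersetCard, card_univ]
  obtain ⟨A, hA, hle⟩ := Finset.exists_le_card_fiber_of_nsmul_le_card_of_maps_to
    (s := T) (t := (univ : Finset Y).powersetCard k) (f := Ya)
    (b := (T.card : ℝ) / ((Fintype.card Y).choose k : ℝ))
    (fun a ha => mem_powersetCard.2 ⟨subset_univ _, hc a ha⟩)
    (card_pos.1 (by rw [hcard]; exact hpos))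
    (by
      have h : ((Fintype.card Y).choose k : ℝ) ≠ 0 := by exact_mod_cast hpos.ne'
      rw [hcard, nsmul_eq_mul, mul_div_cancel₀ _ h])
  refine ⟨T.filter (fun x => Ya x = A), A, filter_subset _ _, (mem_powersetCard.1 hA).2, hle, ?_⟩
  intro g hg
  have hne : ∀ a : X, ∃ y : Y, a ∈ T → y ∈ Ya a ∧ (Ya a = A → y = g a) := by
    intro a
    by_cases ha : a ∈ T
    · by_cases hY : Ya a = A
      · exact ⟨g a, fun _ => ⟨hY ▸ hg a (mem_filter.2 ⟨ha, hY⟩), fun _ => rfl⟩⟩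
      · obtain ⟨y, hy⟩ : (Ya a).Nonempty := card_pos.1 (by rw [hc a ha]; omega)
        exact ⟨y, fun _ => ⟨hy, fun h => absurd h hY⟩⟩
    · exact ⟨g a, fun h => absurd h ha⟩
  choose f hf using hne
  obtain ⟨h, hH, hh⟩ := hs f (fun a ha => (hf a ha).1)
  refine ⟨h, hH, fun x hx => ?_⟩
  obtain ⟨hxT, hxA⟩ := mem_filter.1 hx
  rw [hh x hxT, (hf x hxT).2 hxA]
end

section
/- Large restriction from approximate intersection: Let X be a set of m items and Y a set of n indices, let k ≥ 1 be an integer, and assume H ⊆ P(X, Y) has the (n/(1+2k))-intersection property. Then there exists a set S ⊆ X of size |S| ≥ m/n such that |H|_{S,Y}| ≥ (1+k)^{m/n}. -/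
open Finset

/-- `S` is a `d`-duplicate allocation of the items `X` to the indices `Y`. -/
def IsDupAlloc {X Y : Type*} [DecidableEq X] [Fintype Y] (d : ℕ) (S : Y → Finset X) : Prop :=
  ∀ x : X, (Finset.univ.filter (fun y => x ∈ S y)).card ≤ d

/-- `H` has the `α`-intersection property. -/
def HasIntersection {X Y : Type*} [DecidableEq X] [Fintype Y] (H : Set (Y → Finset X))
    (α : ℝ) : Prop :=
  ∀ T : Y → Finset X, IsDupAlloc 1 T →
    ∃ S ∈ H, (1 / α) * ((∑ y : Y, (T y).card : ℕ) : ℝ) ≤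
      ((∑ y : Y, ((T y) ∩ (S y)).card : ℕ) : ℝ)

/-- `H|_{S,Y}`: the functions from `S` to `Y` induced on `S` by the allocations of `H`. -/
def RestrictAll {X Y : Type*} (H : Set (Y → Finset X)) (S : Finset X) : Set (↥S → Y) :=
  {f | ∃ T ∈ H, ∀ (y : Y) (x : ↥S), (f x = y ↔ (x : X) ∈ T y)}

lemma lr_desc (m n k s t : ℕ) (hk : 1 ≤ k) (hs : (1 + 2 * k) * m ≤ n * s)
    (ht : ∀ i < t, n * i ≤ m) :
    (1 + k) ^ t * m.descFactorial t ≤ n ^ t * s.descFactorial t := by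
  induction t with
  | zero => simp
  | succ t ih =>
    have h1 := ih (fun i hi => ht i (by omega))
    have h2 : (1 + k) * (m - t) ≤ n * (s - t) := by
      have h3 := ht t (by omega)
      have h4 : (1 + k) * (m - t) ≤ (1 + k) * m := Nat.mul_le_mul_left _ (Nat.sub_le _ _)
      have h5 : m ≤ k * m := Nat.le_mul_of_pos_left m hk
      rw [Nat.mul_sub n s t]
      apply Nat.le_sub_of_add_le
      nlinarith
    rw [Nat.descFactorial_succ, Nat.descFactorial_succ]
    calc (1 + k) ^ (t + 1) * ((m - t) * m.descFactorial t)
        = ((1 + k) * (m - t)) * ((1 + k) ^ t * m.descFactorial t) := by ring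
      _ ≤ (n * (s - t)) * (n ^ t * s.descFactorial t) := Nat.mul_le_mul h2 h1
      _ = _ := by ring

lemma lr_choose (m n k s t : ℕ) (hk : 1 ≤ k) (hs : (1 + 2 * k) * m ≤ n * s)
    (ht : ∀ i < t, n * i ≤ m) :
    (1 + k) ^ t * m.choose t ≤ n ^ t * s.choose t := by
  have h := lr_desc m n k s t hk hs ht
  rw [Nat.descFactorial_eq_factorial_mul_choose, Nat.descFactorial_eq_factorial_mul_choose] at h
  have hp := Nat.factorial_pos t
  refine Nat.le_of_mul_le_mul_left ?_ hp
  calc _ = (1 + k) ^ t * (t.factorial * m.choose t) := by ring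
    _ ≤ _ := h
    _ = _ := by ring

lemma lr_fiber (m n : ℕ) (S : Finset (Fin m)) (R : Set (↥S → Fin n)) [DecidablePred (· ∈ R)] :
    (Finset.univ.filter (fun T : Fin m → Fin n => (fun x : ↥S => T x) ∈ R)).card
      ≤ R.ncard * n ^ (m - S.card) := by
  classical
  have hc : (Finset.univ.filter (· ∈ R) ×ˢ
      (Finset.univ : Finset (↥(Sᶜ) → Fin n))).card = R.ncard * n ^ (m - S.card) := by
    rw [Finset.card_product]
    congr 1
    · rw [Set.ncard_eq_toFinset_card']
      congr 1
      ext; simp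
    · rw [Finset.card_univ, Fintype.card_fun, Fintype.card_coe, Finset.card_compl]
      simp
  rw [← hc]
  apply Finset.card_le_card_of_injOn
    (fun T => ((fun x : ↥S => T x), (fun x : ↥(Sᶜ) => T x)))
  · intro T hT
    simpa using hT
  · intro T _ T' _ h
    simp only [Prod.mk.injEq] at h
    funext x
    by_cases hx : x ∈ S
    · exact congrFun h.1 ⟨x, hx⟩
    · exact congrFun h.2 ⟨x, by simpa using hx⟩

lemma lr_exists (m n k : ℕ) (hn : 0 < n)
    (H : Set (Fin n → Finset (Fin m)))
    (hInt : HasIntersection H ((n : ℝ) / (1 + 2 * (k : ℝ)))) (T : Fin m → Fin n) :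
    ∃ h ∈ H, (1 + 2 * k) * m ≤ n * (Finset.univ.filter (fun x => x ∈ h (T x))).card := by
  classical
  obtain ⟨h, hH, hle⟩ := hInt (fun y => Finset.univ.filter (fun x => T x = y)) (by
    intro x
    rw [Finset.card_le_one]
    intro a ha b hb
    simp at ha hb
    rw [← ha, ← hb])
  refine ⟨h, hH, ?_⟩
  have e1 : ∑ y : Fin n, (Finset.univ.filter (fun x => T x = y)).card = m := by
    rw [← Finset.card_eq_sum_card_fiberwise (s := Finset.univ) (t := Finset.univ) (by simp)]
    simp
  have e2 : ∑ y : Fin n, ((Finset.univ.filter (fun x => T x = y)) ∩ h y).card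
      = (Finset.univ.filter (fun x => x ∈ h (T x))).card := by
    rw [Finset.card_eq_sum_card_fiberwise (f := T) (t := Finset.univ) (by simp)]
    apply Finset.sum_congr rfl
    intro y _
    congr 1
    ext x
    simp only [Finset.mem_inter, Finset.mem_filter, Finset.mem_univ, true_and]
    constructor
    · rintro ⟨rfl, h⟩; exact ⟨h, rfl⟩
    · rintro ⟨h, rfl⟩; exact ⟨rfl, h⟩
  rw [e1, e2] at hle
  have hn' : (0 : ℝ) < n := by exact_mod_cast hn
  rw [one_div_div, div_mul_eq_mul_div, div_le_iff₀ hn'] at hle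
  have : ((1 + 2 * k) * m : ℝ) ≤ n * ((Finset.univ.filter (fun x => x ∈ h (T x))).card : ℝ) := by
    linarith
  exact_mod_cast this

lemma lr_main (m n k t : ℕ) (hk : 1 ≤ k) (hn : 0 < n) (htm : t ≤ m)
    (ht : ∀ i < t, n * i ≤ m)
    (H : Set (Fin n → Finset (Fin m)))
    (hAlloc : ∀ S ∈ H, IsDupAlloc 1 S)
    (hInt : HasIntersection H ((n : ℝ) / (1 + 2 * (k : ℝ)))) :
    ∃ S : Finset (Fin m), S.card = t ∧ (1 + k) ^ t ≤ (RestrictAll H S).ncard := by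
  classical
  by_contra! hcon
  have key : ∀ T : Fin m → Fin n, (1 + k) ^ t * m.choose t ≤ n ^ t *
      ((Finset.powersetCard t Finset.univ).filter
        (fun S : Finset (Fin m) => (fun x : ↥S => T x) ∈ RestrictAll H S)).card := by
    intro T
    obtain ⟨h, hH, hs⟩ := lr_exists m n k hn H hInt T
    refine (lr_choose m n k _ t hk hs ht).trans (Nat.mul_le_mul_left _ ?_)
    rw [← Finset.card_powersetCard]
    apply Finset.card_le_card
    intro S hS
    rw [Finset.mem_powersetCard] at hS
    rw [Finset.mem_filter, Finset.mem_powersetCard]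
    refine ⟨⟨Finset.subset_univ _, hS.2⟩, h, hH, ?_⟩
    intro y x
    have hx : (x : Fin m) ∈ h (T x) := by simpa using hS.1 x.2
    constructor
    · rintro rfl; exact hx
    · intro hy
      exact Finset.card_le_one.mp (hAlloc h hH x) _ (by simpa using hx) _ (by simpa using hy)
  have h1 := Finset.sum_le_sum (s := Finset.univ) (fun T _ => key T)
  rw [← Finset.mul_sum, ← Finset.mul_sum] at h1
  have hdc := Finset.sum_card_bipartiteAbove_eq_sum_card_bipartiteBelow
    (s := (Finset.univ : Finset (Fin m → Fin n)))
    (t := Finset.powersetCard t (Finset.univ : Finset (Fin m)))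
    (fun T S => (fun x : ↥S => T x) ∈ RestrictAll H S)
  unfold Finset.bipartiteAbove Finset.bipartiteBelow at hdc
  beta_reduce at hdc
  rw [hdc] at h1
  have h2 : ∑ S ∈ Finset.powersetCard t (Finset.univ : Finset (Fin m)),
      (Finset.univ.filter (fun T : Fin m → Fin n =>
        (fun x : ↥S => T x) ∈ RestrictAll H S)).card
      < ∑ S ∈ Finset.powersetCard t (Finset.univ : Finset (Fin m)),
        (1 + k) ^ t * n ^ (m - t) := by
    apply Finset.sum_lt_sum_of_nonempty
    · rw [Finset.powersetCard_nonempty]; simpa using htm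
    · intro S hS
      rw [Finset.mem_powersetCard] at hS
      have h3 := lr_fiber m n S (RestrictAll H S)
      rw [hS.2] at h3
      exact h3.trans_lt (Nat.mul_lt_mul_of_pos_right (hcon S hS.2) (by positivity))
  have h4 := h1.trans_lt (Nat.mul_lt_mul_of_pos_left h2 (by positivity : 0 < n ^ t))
  simp only [Finset.sum_const, Finset.card_powersetCard, Finset.card_univ, Fintype.card_fun,
    Fintype.card_fin, smul_eq_mul] at h4
  have h5 : n ^ m = n ^ t * n ^ (m - t) := by rw [← pow_add]; congr 1; omega
  rw [h5] at h4
  apply absurd h4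
  apply not_lt_of_ge
  apply le_of_eq
  ring

/-- Large restriction from approximate intersection (Lemma 5 of Buchfuhrer–Umans). -/
theorem large_restriction_from_intersection (m n k : ℕ) (hk : 1 ≤ k)
    (H : Set (Fin n → Finset (Fin m)))
    (hAlloc : ∀ S ∈ H, IsDupAlloc 1 S)
    (hInt : HasIntersection H ((n : ℝ) / (1 + 2 * (k : ℝ)))) :
    ∃ S : Finset (Fin m), (m : ℝ) / (n : ℝ) ≤ (S.card : ℝ) ∧
      ((1 + k : ℝ)) ^ ((m : ℝ) / (n : ℝ)) ≤ ((RestrictAll H S).ncard : ℝ) := by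
  rcases Nat.eq_zero_or_pos n with rfl | hn
  · refine ⟨∅, by simp, ?_⟩
    obtain ⟨h, hH, -⟩ := hInt (fun _ => ∅) (by intro x; simp)
    have : 0 < (RestrictAll H ∅).ncard := by
      rw [Set.ncard_pos]
      exact ⟨fun x => absurd x.2 (Finset.notMem_empty _), h, hH, fun y => y.elim0⟩
    simp only [Nat.cast_zero, div_zero, Real.rpow_zero]
    exact_mod_cast this
  · have hn' : (0 : ℝ) < n := by exact_mod_cast hn
    obtain ⟨S, hS, hR⟩ := lr_main m n k ⌈(m : ℝ) / n⌉₊ hk hn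
      (by
        apply Nat.ceil_le.mpr
        apply div_le_self (by positivity)
        exact_mod_cast hn)
      (by
        intro i hi
        have := Nat.lt_ceil.mp hi
        rw [lt_div_iff₀ hn'] at this
        have h2 : (n * i : ℝ) ≤ m := by linarith
        exact_mod_cast h2) H hAlloc hInt
    refine ⟨S, by rw [hS]; exact Nat.le_ceil _, ?_⟩
    calc (1 + k : ℝ) ^ ((m : ℝ) / (n : ℝ)) ≤ (1 + k : ℝ) ^ ((⌈(m : ℝ) / n⌉₊ : ℕ) : ℝ) := by
          apply Real.rpow_le_rpow_of_exponent_le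
          · have : (0 : ℝ) ≤ k := by positivity
            linarith
          · exact Nat.le_ceil _
      _ = (1 + k : ℝ) ^ ⌈(m : ℝ) / n⌉₊ := Real.rpow_natCast _ _
      _ ≤ _ := by exact_mod_cast hR
end

section
/- The class H^𝒴 achieves an l/(l−1) approximation for XOS valuations: Let X and Y be finite sets, l ≥ 2 an integer, and for every x ∈ X fix a partition of Y into l nonempty sets Y = Y_{x,1} ∪̇ ⋯ ∪̇ Y_{x,l}; write 𝒴 = {Y_{x,j}}. Then for every collection {v_y}_{y∈Y} of XOS valuations on X and every partition {S_y}_{y∈Y} of X, there exists a function f ∈ H^𝒴 such that Σ_{y∈Y} v_y(f⁻¹(y)) ≥ ((l−1)/l) · Σ_{y∈Y} v_y(S_y). -/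
open Finset

/-- An XOS valuation: the maximum of finitely many nonnegative additive valuations. -/
def IsXOS {X : Type*} (v : Finset X → ℝ) : Prop :=
  ∃ (r : ℕ) (w : Fin (r + 1) → X → ℝ), (∀ j x, 0 ≤ w j x) ∧
    ∀ S : Finset X, v S = Finset.univ.sup' Finset.univ_nonempty (fun j => ∑ x ∈ S, w j x)

/-- `S` is a partition of `X` indexed by `Y`. -/
def IsPartitionFam {X Y : Type*} (S : Y → Finset X) : Prop :=
  (∀ y y' : Y, y ≠ y' → Disjoint (S y) (S y')) ∧ ∀ x : X, ∃ y : Y, x ∈ S y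

/-- The class `H^𝒴` achieves an `l/(l-1)` approximation for XOS valuations. -/
theorem HY_xos_approx {X Y : Type*} [Fintype X] [Fintype Y] [DecidableEq Y]
    (l : ℕ) (hl : 2 ≤ l) (P : X → Fin l → Finset Y)
    (hP : ∀ x : X, (∀ i : Fin l, (P x i).Nonempty) ∧
      (∀ i j : Fin l, i ≠ j → Disjoint (P x i) (P x j)) ∧ (∀ y : Y, ∃ i : Fin l, y ∈ P x i))
    (v : Y → Finset X → ℝ) (hv : ∀ y, IsXOS (v y))
    (S : Y → Finset X) (hS : IsPartitionFam S) :
    ∃ f : X → Y, (∃ i : Fin l, ∀ x : X, f x ∉ P x i) ∧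
      (((l : ℝ) - 1) / (l : ℝ)) * (∑ y : Y, v y (S y)) ≤
        ∑ y : Y, v y (Finset.univ.filter (fun x => f x = y)) := by
  classical
  have hw : ∀ y, ∃ w : X → ℝ, (∀ x, 0 ≤ w x) ∧ v y (S y) = ∑ x ∈ S y, w x ∧
      ∀ T : Finset X, ∑ x ∈ T, w x ≤ v y T := by
    intro y
    obtain ⟨r, w, h0, h1⟩ := hv y
    obtain ⟨j, -, hj⟩ := Finset.exists_mem_eq_sup' (Finset.univ_nonempty (α := Fin (r + 1)))
      (fun j => ∑ x ∈ S y, w j x)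
    refine ⟨w j, h0 j, (h1 _).trans hj, fun T => ?_⟩
    rw [h1 T]
    exact Finset.le_sup' (fun j => ∑ x ∈ T, w j x) (Finset.mem_univ j)
  choose w hw0 hwS hwT using hw
  choose g hg using hS.2
  have hSg : ∀ y, S y = Finset.univ.filter (fun x => g x = y) := by
    intro y
    ext x
    simp only [Finset.mem_filter, Finset.mem_univ, true_and]
    constructor
    · intro hx
      by_contra hne
      exact Finset.disjoint_left.mp (hS.1 _ _ hne) (hg x) hx
    · rintro rfl
      exact hg x
  have hsum : ∀ f : X → Y, ∑ y : Y, ∑ x ∈ Finset.univ.filter (fun x => f x = y), w y x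
      = ∑ x, w (f x) x := by
    intro f
    rw [← Finset.sum_fiberwise Finset.univ f (fun x => w (f x) x)]
    refine Finset.sum_congr rfl fun y _ => Finset.sum_congr rfl fun x hx => ?_
    rw [(Finset.mem_filter.mp hx).2]
  have htot : ∑ y : Y, v y (S y) = ∑ x, w (g x) x := by
    rw [← hsum g]
    refine Finset.sum_congr rfl fun y _ => ?_
    rw [hwS y, hSg y]
  have halt : ∀ (i : Fin l) (x : X), ∃ y, y ∉ P x i := by
    intro i x
    haveI : Nontrivial (Fin l) := Fin.nontrivial_iff_two_le.mpr hl
    obtain ⟨j, hj⟩ := exists_ne i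
    obtain ⟨y, hy⟩ := (hP x).1 j
    exact ⟨y, Finset.disjoint_left.mp ((hP x).2.1 j i hj) hy⟩
  choose a ha using halt
  have hlpos : (0 : ℝ) < l := by
    have : 0 < l := by omega
    exact_mod_cast this
  have hcount : ∀ x, ∑ i : Fin l, (if g x ∈ P x i then 0 else w (g x) x)
      = ((l : ℝ) - 1) * w (g x) x := by
    intro x
    obtain ⟨k, hk⟩ := (hP x).2.2 (g x)
    have h : ∀ i : Fin l, (if g x ∈ P x i then 0 else w (g x) x)
        = w (g x) x - if i = k then w (g x) x else 0 := by
      intro i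
      by_cases hik : i = k
      · subst hik
        simp [hk]
      · have : g x ∉ P x i := fun h =>
          Finset.disjoint_left.mp ((hP x).2.1 i k hik) h hk
        simp [this, hik]
    rw [Finset.sum_congr rfl fun i _ => h i, Finset.sum_sub_distrib]
    simp
    ring
  have hpig : ∃ i : Fin l, (((l : ℝ) - 1) / l) * ∑ x, w (g x) x
      ≤ ∑ x, (if g x ∈ P x i then 0 else w (g x) x) := by
    by_contra! hcon
    haveI : Nonempty (Fin l) := ⟨⟨0, by omega⟩⟩
    have h := Finset.sum_lt_sum_of_nonempty (Finset.univ_nonempty (α := Fin l))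
      (fun i _ => hcon i)
    rw [Finset.sum_comm, Finset.sum_congr rfl fun x _ => hcount x, ← Finset.mul_sum] at h
    simp only [Finset.sum_const, Finset.card_univ, Fintype.card_fin, nsmul_eq_mul] at h
    have e : (l : ℝ) * (((l : ℝ) - 1) / l * ∑ x, w (g x) x)
        = ((l : ℝ) - 1) * ∑ x, w (g x) x := by
      field_simp
    linarith
  obtain ⟨i, hi⟩ := hpig
  refine ⟨fun x => if g x ∈ P x i then a i x else g x, ⟨i, fun x => ?_⟩, ?_⟩
  · by_cases h : g x ∈ P x i
    · simpa [h] using ha i x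
    · simp [h]
  · rw [htot]
    refine hi.trans (le_trans ?_ (Finset.sum_le_sum fun y _ => hwT y _))
    rw [hsum (fun x => if g x ∈ P x i then a i x else g x)]
    refine Finset.sum_le_sum fun x _ => ?_
    by_cases h : g x ∈ P x i
    · simpa [h] using hw0 _ x
    · simp [h]
end

section
/- The class H^𝒴 with l = 2 achieves a 2-approximation for subadditive valuations: Let X and Y be finite sets, and for every x ∈ X fix a partition of Y into two nonempty sets Y = Y_{x,1} ∪̇ Y_{x,2}; write 𝒴 = {Y_{x,j}}. Then for every collection {v_y}_{y∈Y} of normalized, nondecreasing, subadditive valuations on X and every partition {S_y}_{y∈Y} of X, there exists a function f ∈ H^𝒴 such that Σ_{y∈Y} v_y(f⁻¹(y)) ≥ (1/2) · Σ_{y∈Y} v_y(S_y). -/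
open Finset

/-- A valuation on `X`: normalized, nonnegative and nondecreasing. -/
def IsValuation {X : Type*} (v : Finset X → ℝ) : Prop :=
  v ∅ = 0 ∧ (∀ S, 0 ≤ v S) ∧ ∀ S T : Finset X, S ⊆ T → v S ≤ v T

/-- A subadditive valuation: `v (S ∪ T) ≤ v S + v T` for disjoint `S`, `T`. -/
def IsSubadditive {X : Type*} [DecidableEq X] (v : Finset X → ℝ) : Prop :=
  ∀ S T : Finset X, Disjoint S T → v (S ∪ T) ≤ v S + v T

/-- The class `H^𝒴` with `l = 2` achieves a 2-approximation for subadditive valuations. -/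
theorem HY_subadditive_approx {X Y : Type*} [Fintype X] [Fintype Y] [DecidableEq X]
    [DecidableEq Y] (P : X → Fin 2 → Finset Y)
    (hP : ∀ x : X, (∀ i : Fin 2, (P x i).Nonempty) ∧
      (∀ i j : Fin 2, i ≠ j → Disjoint (P x i) (P x j)) ∧ (∀ y : Y, ∃ i : Fin 2, y ∈ P x i))
    (v : Y → Finset X → ℝ) (hv : ∀ y, IsValuation (v y) ∧ IsSubadditive (v y))
    (S : Y → Finset X) (hS : IsPartitionFam S) :
    ∃ f : X → Y, (∃ i : Fin 2, ∀ x : X, f x ∉ P x i) ∧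
      (1 / 2 : ℝ) * (∑ y : Y, v y (S y)) ≤
        ∑ y : Y, v y (Finset.univ.filter (fun x => f x = y)) := by
  classical
  choose g hg using hS.2
  have hgu : ∀ x y, x ∈ S y → g x = y := by
    intro x y hx
    by_contra hne
    exact Finset.disjoint_left.mp (hS.1 _ _ hne) (hg x) hx
  have hex : ∀ (i : Fin 2) (x : X), ∃ z : Y, z ∉ P x i ∧ (g x ∉ P x i → z = g x) := by
    intro i x
    by_cases h : g x ∈ P x i
    · obtain ⟨j, hj⟩ : ∃ j : Fin 2, j ≠ i := exists_ne i
      obtain ⟨z, hz⟩ := (hP x).1 j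
      exact ⟨z, Finset.disjoint_left.mp ((hP x).2.1 j i hj) hz, fun h' => absurd h h'⟩
    · exact ⟨g x, h, fun _ => rfl⟩
  choose f hf1 hf2 using hex
  have key : ∀ y, v y (S y) ≤ v y (Finset.univ.filter (fun x => f 0 x = y)) +
      v y (Finset.univ.filter (fun x => f 1 x = y)) := by
    intro y
    obtain ⟨⟨_, _, hm⟩, hs⟩ := hv y
    have hsub : ∀ i : Fin 2, (S y).filter (fun x => y ∉ P x i) ⊆
        Finset.univ.filter (fun x => f i x = y) := by
      intro i x hx
      rw [Finset.mem_filter] at hx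
      have h1 := hgu x y hx.1
      simp only [Finset.mem_filter, Finset.mem_univ, true_and]
      rw [hf2 i x (by rw [h1]; exact hx.2), h1]
    have hd : Disjoint ((S y).filter (fun x => y ∉ P x 0))
        ((S y).filter (fun x => y ∉ P x 1)) := by
      rw [Finset.disjoint_left]
      intro x h0 h1
      rw [Finset.mem_filter] at h0 h1
      obtain ⟨i, hi⟩ := (hP x).2.2 y
      fin_cases i
      · exact h0.2 hi
      · exact h1.2 hi
    have hu : S y ⊆ (S y).filter (fun x => y ∉ P x 0) ∪ (S y).filter (fun x => y ∉ P x 1) := by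
      intro x hx
      simp only [Finset.mem_union, Finset.mem_filter, hx, true_and]
      by_cases h : y ∈ P x 0
      · exact Or.inr (Finset.disjoint_left.mp ((hP x).2.1 0 1 (by decide)) h)
      · exact Or.inl h
    linarith [hm _ _ hu, hs _ _ hd, hm _ _ (hsub 0), hm _ _ (hsub 1)]
  have hsum := Finset.sum_le_sum (fun y (_ : y ∈ Finset.univ) => key y)
  rw [Finset.sum_add_distrib] at hsum
  rcases le_total (∑ y : Y, v y (Finset.univ.filter (fun x => f 0 x = y)))
    (∑ y : Y, v y (Finset.univ.filter (fun x => f 1 x = y))) with h | h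
  · exact ⟨f 1, ⟨1, hf1 1⟩, by linarith⟩
  · exact ⟨f 0, ⟨0, hf1 0⟩, by linarith⟩
end

section
/- Bad points obstruct shattering in H^𝒴: Let X and Y be finite sets, l ≥ 2 an integer, and for every x ∈ X fix a partition of Y into l nonempty sets Y = Y_{x,1} ∪̇ ⋯ ∪̇ Y_{x,l}; write 𝒴 = {Y_{x,j}}. Let S ⊆ X and A ⊆ Y, and call a point x ∈ S bad if A ∩ Y_{x,i} ≠ ∅ for every 1 ≤ i ≤ l. If S contains at least l distinct bad points, then the pair (S, A) is not shattered by H^𝒴; i.e., there exists a function g : S → A that is not the restriction to S of any f ∈ H^𝒴. -/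
open Finset

/-- Bad points obstruct shattering in `H^𝒴`. -/
theorem bad_points_obstruct_shattering {X Y : Type*} [Fintype X] [Fintype Y]
    [DecidableEq X] [DecidableEq Y]
    (l : ℕ) (hl : 2 ≤ l) (P : X → Fin l → Finset Y)
    (hP : ∀ x : X, (∀ i : Fin l, (P x i).Nonempty) ∧
      (∀ i j : Fin l, i ≠ j → Disjoint (P x i) (P x j)) ∧ (∀ y : Y, ∃ i : Fin l, y ∈ P x i))
    (S : Finset X) (A : Finset Y)
    (hbad : l ≤ (S.filter (fun x => ∀ i : Fin l, (A ∩ P x i).Nonempty)).card) :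
    ∃ g : X → Y, (∀ x ∈ S, g x ∈ A) ∧
      ∀ f : X → Y, (∃ i : Fin l, ∀ x : X, f x ∉ P x i) → ∃ x ∈ S, f x ≠ g x := by
  obtain ⟨e⟩ : Nonempty (Fin l ↪ {x // x ∈ S.filter (fun x => ∀ i : Fin l, (A ∩ P x i).Nonempty)}) :=
    Function.Embedding.nonempty_of_card_le (by simpa only [Fintype.card_fin, Fintype.card_coe] using hbad)
  have he : ∀ i, (e i : X) ∈ S ∧ ∀ j : Fin l, (A ∩ P (e i) j).Nonempty := fun i =>
    Finset.mem_filter.1 (e i).2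
  have key : ∀ x : X, ∃ y : Y, y ∈ A ∧ ∀ i, (e i : X) = x → y ∈ P x i := by
    intro x
    by_cases h : ∃ i, (e i : X) = x
    · obtain ⟨i, rfl⟩ := h
      obtain ⟨y, hy⟩ := (he i).2 i
      rw [Finset.mem_inter] at hy
      refine ⟨y, hy.1, fun j hj => ?_⟩
      have : j = i := e.injective (Subtype.ext hj)
      rw [this]
      exact hy.2
    · obtain ⟨y, hy⟩ := (he ⟨0, by omega⟩).2 ⟨0, by omega⟩
      exact ⟨y, (Finset.mem_inter.1 hy).1, fun i hi => (h ⟨i, hi⟩).elim⟩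
  choose g hgA hg using key
  refine ⟨g, fun x _ => hgA x, ?_⟩
  rintro f ⟨i, hi⟩
  refine ⟨e i, (he i).1, fun h => hi (e i) ?_⟩
  rw [h]
  exact hg _ i rfl
end

section
/- Existence of a class with good XOS approximation and no large shattered pair: Let X and Y be finite sets with |X| = m and |Y| = n, and let 2 ≤ l ≤ n be an integer dividing n with 8(l−1)·ln(n) ≥ 2l. Then there exists a class H ⊆ Y^X such that: (i) for every collection {v_y}_{y∈Y} of XOS valuations on X and every partition {S_y}_{y∈Y} of X, there exists f ∈ H with Σ_{y∈Y} v_y(f⁻¹(y)) ≥ ((l−1)/l) · Σ_{y∈Y} v_y(S_y); and (ii) there is no pair S ⊆ X, A ⊆ Y with |S| ≥ 8(l−1)·ln(n) and |A| > 24(l−1)·ln(m) that is shattered by H. -/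
open Finset

lemma aux_g {X Y : Type*} [Fintype X] [Fintype Y] [DecidableEq X] [DecidableEq Y] (y0 : Y)
    (l : ℕ) (hl : 0 < l) (c : X × Y → Fin l) (S : Finset X) (A : Finset Y) (hA : 0 < A.card)
    (h : ∀ i, (A.card : ℝ) * Real.log l < (((S ×ˢ A).filter (fun z => c z = i)).card : ℝ)) :
    ∃ g : X → Y, (∀ x ∈ S, g x ∈ A) ∧ ∀ i, ∃ x ∈ S, c (x, g x) = i := by
  by_contra hcon
  push Not at hcon
  have hsub : Fintype.piFinset (fun x => if x ∈ S then A else {y0}) ⊆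
      (Finset.univ : Finset (Fin l)).biUnion (fun i =>
        Fintype.piFinset (fun x => if x ∈ S then A.filter (fun y => c (x, y) ≠ i) else {y0})) := by
    intro g hg
    rw [Fintype.mem_piFinset] at hg
    obtain ⟨i, hi⟩ := hcon g (fun x hx => by have := hg x; rwa [if_pos hx] at this)
    rw [Finset.mem_biUnion]
    refine ⟨i, Finset.mem_univ _, ?_⟩
    rw [Fintype.mem_piFinset]
    intro x
    have := hg x
    by_cases hx : x ∈ S
    · rw [if_pos hx] at this ⊢
      exact Finset.mem_filter.2 ⟨this, hi x hx⟩
    · rw [if_neg hx] at this ⊢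
      exact this
  have hprod : ∀ B : X → Finset Y,
      (Fintype.piFinset (fun x => if x ∈ S then B x else {y0})).card = ∏ x ∈ S, (B x).card := by
    intro B
    rw [Fintype.card_piFinset]
    rw [← Finset.prod_subset (Finset.subset_univ S)]
    · exact Finset.prod_congr rfl (fun x hx => by rw [if_pos hx])
    · intro x _ hx
      rw [if_neg hx, Finset.card_singleton]
  have hcard := (Finset.card_le_card hsub).trans Finset.card_biUnion_le
  rw [hprod] at hcard
  simp only [hprod (fun x => A.filter (fun y => c (x, y) ≠ _))] at hcard
  have hcardR : ((A.card : ℝ)) ^ S.card ≤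
      ∑ i : Fin l, ∏ x ∈ S, ((A.filter (fun y => c (x, y) ≠ i)).card : ℝ) := by
    have := (Nat.cast_le (α := ℝ)).2 hcard
    push_cast at this
    rwa [Finset.prod_const] at this
  have hA' : (0 : ℝ) < A.card := by exact_mod_cast hA
  have hl' : (0 : ℝ) < l := by exact_mod_cast hl
  have key : ∀ i : Fin l, ∏ x ∈ S, ((A.filter (fun y => c (x, y) ≠ i)).card : ℝ) <
      (A.card : ℝ) ^ S.card / l := by
    intro i
    have h1 : ∏ x ∈ S, ((A.filter (fun y => c (x, y) ≠ i)).card : ℝ) ≤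
        ∏ x ∈ S, ((A.card : ℝ) * Real.exp (-((A.filter (fun y => c (x, y) = i)).card / A.card))) := by
      refine Finset.prod_le_prod (fun _ _ => Nat.cast_nonneg _) (fun x _ => ?_)
      have e := Finset.card_filter_add_card_filter_not (s := A) (fun y => c (x, y) = i)
      have e' : ((A.filter (fun y => c (x, y) = i)).card : ℝ) +
        ((A.filter (fun y => c (x, y) ≠ i)).card : ℝ) = A.card := by exact_mod_cast e
      have := Real.add_one_le_exp (-(((A.filter (fun y => c (x, y) = i)).card : ℝ) / A.card))
      have h2 := mul_le_mul_of_nonneg_left this hA'.le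
      refine le_trans (le_of_eq ?_) h2
      field_simp
      linarith
    refine h1.trans_lt ?_
    rw [Finset.prod_mul_distrib, Finset.prod_const, ← Real.exp_sum, div_eq_mul_inv]
    refine mul_lt_mul_of_pos_left ?_ (pow_pos hA' _)
    rw [← Real.exp_log (inv_pos.2 hl'), Real.exp_lt_exp, Real.log_inv, Finset.sum_neg_distrib,
      neg_lt_neg_iff, ← Finset.sum_div, lt_div_iff₀ hA', mul_comm]
    refine (h i).trans_le (le_of_eq ?_)
    rw [Finset.card_filter, Finset.sum_product]
    push_cast
    refine Finset.sum_congr rfl (fun x _ => ?_)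
    rw [Finset.card_filter]
    push_cast
    rfl
  have : Nonempty (Fin l) := ⟨⟨0, hl⟩⟩
  have := Finset.sum_lt_sum_of_nonempty (s := (Finset.univ : Finset (Fin l)))
    Finset.univ_nonempty (fun i _ => key i)
  rw [Finset.sum_const, Finset.card_univ, Fintype.card_fin, nsmul_eq_mul,
    mul_div_cancel₀ _ hl'.ne'] at this
  linarith

lemma aux_mgf {Z : Type*} [Fintype Z] [DecidableEq Z] (l : ℕ) (hl : 0 < l) (T : Finset Z)
    (i : Fin l) :
    ∑ c : Z → Fin l, ((1 : ℝ) / 4) ^ (T.filter (fun z => c z = i)).card =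
      (l : ℝ) ^ (Fintype.card Z) * (1 - 3 / (4 * l)) ^ T.card := by
  have hl' : (0 : ℝ) < l := by exact_mod_cast hl
  have h1 : ∀ c : Z → Fin l, ((1 : ℝ) / 4) ^ (T.filter (fun z => c z = i)).card =
      ∏ z, (fun (z : Z) (j : Fin l) => if z ∈ T ∧ j = i then (1 : ℝ) / 4 else 1) z (c z) := by
    intro c
    simp only
    rw [Finset.prod_ite, Finset.prod_const, Finset.prod_const_one, mul_one]
    congr 2
    ext z
    simp
  rw [Finset.sum_congr rfl (fun c _ => h1 c)]
  rw [← Fintype.piFinset_univ, ← Finset.prod_univ_sum (fun _ : Z => (Finset.univ : Finset (Fin l)))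
    (fun (z : Z) (j : Fin l) => if z ∈ T ∧ j = i then (1 : ℝ) / 4 else 1)]
  have h2 : ∀ z : Z, ∑ j : Fin l, (if z ∈ T ∧ j = i then (1 : ℝ) / 4 else 1) =
      l * (if z ∈ T then (1 - 3 / (4 * (l : ℝ))) else 1) := by
    intro z
    by_cases hz : z ∈ T
    · have : ∀ j : Fin l, (if z ∈ T ∧ j = i then (1 : ℝ) / 4 else 1) =
        1 - (if j = i then (3 : ℝ) / 4 else 0) := by
        intro j
        by_cases hj : j = i <;> simp [hz, hj]
        norm_num
      simp only [this, Finset.sum_sub_distrib, Finset.sum_ite_eq', if_pos hz]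
      simp
      field_simp
    · simp [hz]
  rw [Finset.prod_congr rfl (fun z _ => h2 z), Finset.prod_mul_distrib, Finset.prod_const,
    Finset.prod_ite_mem]
  simp

lemma aux_bad {Z : Type*} [Fintype Z] [DecidableEq Z] (l : ℕ) (hl : 0 < l) (T : Finset Z)
    (i : Fin l) (t : ℝ) :
    ((Finset.univ.filter (fun c : Z → Fin l =>
      ((T.filter (fun z => c z = i)).card : ℝ) ≤ t)).card : ℝ) ≤
      Real.exp (Real.log 4 * t) * ((l : ℝ) ^ (Fintype.card Z) * (1 - 3 / (4 * l)) ^ T.card) := by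
  rw [← aux_mgf l hl T i, Finset.mul_sum, Finset.card_filter]
  push_cast
  refine Finset.sum_le_sum (fun c _ => ?_)
  split_ifs with h
  · have : ((1 : ℝ) / 4) ^ (T.filter (fun z => c z = i)).card =
        Real.exp (-(Real.log 4 * (T.filter (fun z => c z = i)).card)) := by
      rw [mul_comm, ← mul_neg, Real.exp_nat_mul, Real.exp_neg, Real.exp_log (by norm_num)]
      norm_num
    rw [this, ← Real.exp_add]
    apply Real.one_le_exp
    have : (0 : ℝ) ≤ Real.log 4 := Real.log_nonneg (by norm_num)
    nlinarith
  · positivity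

lemma aux_arith (L a k u w q l : ℝ) (hL : 1 ≤ L) (hl : l = L + 1) (hk : 8 * L * w ≤ k)
    (ha : 23 * L * u ≤ a) (hu : 1.38 ≤ u) (hq : q ≤ w) (hq0 : 0 ≤ q) (hkp : 0 < k) :
    k * u + a * w + q + Real.log 4 * (a * q) - 3 / (4 * l) * (k * a) < 0 := by
  have hlog : Real.log 4 < 1.3864 := by
    have : Real.log 4 = 2 * Real.log 2 := by
      rw [show (4 : ℝ) = 2 ^ 2 by norm_num, Real.log_pow]; norm_num
    have := Real.log_two_lt_d9
    linarith
  have hL0 : 0 < L := by linarith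
  have hw : 0 ≤ w := hq0.trans hq
  have hLw : 0 ≤ L * w := by positivity
  have hk0 : 0 ≤ k := by nlinarith
  have hLu : 1.38 ≤ L * u := by nlinarith
  have ha31 : 31 ≤ a := by nlinarith
  have hlog0 : 0 ≤ Real.log 4 := Real.log_nonneg (by norm_num)
  have h1 : L * (k * u) ≤ k * a / 23 := by nlinarith [mul_le_mul_of_nonneg_left ha hk0]
  have h2 : L * (a * w) ≤ k * a / 8 := by
    nlinarith [mul_le_mul_of_nonneg_left hk (by linarith : 0 ≤ a)]
  have h3 : L * (a * q) ≤ k * a / 8 := by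
    refine le_trans ?_ h2
    have : 0 ≤ a := by linarith
    gcongr
  have hLq : 0 ≤ L * q := by positivity
  have h4 : L * q ≤ k * a / 248 := by nlinarith
  have hLaq : 0 ≤ L * (a * q) := by
    have : 0 ≤ a := by linarith
    positivity
  have h5 : Real.log 4 * (L * (a * q)) ≤ 1.3864 * (k * a / 8) := by
    nlinarith
  have h6 : 3 / 8 * (k * a) ≤ L * (3 / (4 * l) * (k * a)) := by
    have hka : 0 ≤ k * a := mul_nonneg hk0 (by linarith)
    rw [← mul_assoc L]
    refine mul_le_mul_of_nonneg_right ?_ hka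
    rw [← mul_div_assoc, le_div_iff₀ (by linarith)]
    linarith
  by_contra hneg
  push Not at hneg
  have h7 := mul_nonneg hL0.le hneg
  have hkpos : 0 < k := hkp
  have hka : 0 < k * a := mul_pos hkpos (by linarith)
  nlinarith

lemma aux_exists {X Y : Type*} [Fintype X] [Fintype Y] [DecidableEq X] [DecidableEq Y]
    (m n l k a : ℕ) (hm : Fintype.card X = m) (hn : Fintype.card Y = n)
    (hl2 : 2 ≤ l) (hln : l ≤ n) (hm4 : 4 ≤ m) (hkp : (0 : ℝ) < k)
    (hk : 8 * ((l : ℝ) - 1) * Real.log n ≤ k)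
    (ha : 23 * ((l : ℝ) - 1) * Real.log m ≤ a) :
    ∃ c : X × Y → Fin l, ∀ (S : Finset X) (A : Finset Y), S.card = k → A.card = a →
      ∀ i, (a : ℝ) * Real.log l < (((S ×ˢ A).filter (fun z => c z = i)).card : ℝ) := by
  by_contra hcon
  push Not at hcon
  have hl0 : 0 < l := by omega
  have hsub : (Finset.univ : Finset (X × Y → Fin l)) ⊆
      (Finset.powersetCard k (Finset.univ : Finset X) ×ˢ
        (Finset.powersetCard a (Finset.univ : Finset Y) ×ˢ (Finset.univ : Finset (Fin l)))).biUnion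
      (fun p => Finset.univ.filter (fun c : X × Y → Fin l =>
      (((p.1 ×ˢ p.2.1).filter (fun z => c z = p.2.2)).card : ℝ) ≤ a * Real.log l)) := by
    intro c _
    obtain ⟨S, A, hS, hA, i, hi⟩ := hcon c
    rw [Finset.mem_biUnion]
    refine ⟨(S, A, i), ?_, ?_⟩
    · simp [Finset.mem_powersetCard, hS, hA]
    · exact Finset.mem_filter.2 ⟨Finset.mem_univ _, hi⟩
  have hcard := (Finset.card_le_card hsub).trans Finset.card_biUnion_le
  have hcardR := (Nat.cast_le (α := ℝ)).2 hcard
  rw [Nat.cast_sum] at hcardR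
  have hle := hcardR.trans (Finset.sum_le_card_nsmul _ _ (Real.exp (Real.log 4 * (a * Real.log l)) *
      ((l : ℝ) ^ (Fintype.card (X × Y)) * (1 - 3 / (4 * l)) ^ (k * a))) (by
    intro p hp
    simp only [Finset.mem_product, Finset.mem_powersetCard] at hp
    have := aux_bad l hl0 (p.1 ×ˢ p.2.1) p.2.2 (a * Real.log l)
    rw [Finset.card_product, hp.1.2, hp.2.1.2] at this
    exact this))
  rw [Finset.card_univ, Fintype.card_fun, Fintype.card_fin, Finset.card_product,
    Finset.card_product, Finset.card_powersetCard, Finset.card_powersetCard, Finset.card_univ,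
    Finset.card_univ, Finset.card_univ, Fintype.card_fin, hm, hn, nsmul_eq_mul] at hle
  push_cast at hle
  have hlR : (2 : ℝ) ≤ l := by exact_mod_cast hl2
  have hmR : (4 : ℝ) ≤ m := by exact_mod_cast hm4
  have hnR : (l : ℝ) ≤ n := by exact_mod_cast hln
  have hm0 : (0 : ℝ) < m := by linarith
  have hn0 : (0 : ℝ) < n := by linarith
  have hP : (0 : ℝ) < (l : ℝ) ^ (Fintype.card (X × Y)) := by positivity
  have hb0 : (0 : ℝ) ≤ 1 - 3 / (4 * l) := by
    rw [sub_nonneg, div_le_one (by linarith)]; linarith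
  have hc1 : ((m.choose k : ℕ) : ℝ) ≤ Real.exp (k * Real.log m) := by
    rw [Real.exp_nat_mul, Real.exp_log hm0]
    exact_mod_cast Nat.choose_le_pow m k
  have hc2 : ((n.choose a : ℕ) : ℝ) ≤ Real.exp (a * Real.log n) := by
    rw [Real.exp_nat_mul, Real.exp_log hn0]
    exact_mod_cast Nat.choose_le_pow n a
  have hc3 : (l : ℝ) = Real.exp (Real.log l) := (Real.exp_log (by linarith)).symm
  have hc4 : (1 - 3 / (4 * (l : ℝ))) ^ (k * a) ≤ Real.exp (-(3 / (4 * (l : ℝ)) * (k * a))) := by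
    have h1 := Real.add_one_le_exp (-(3 / (4 * (l : ℝ))))
    have h2 := pow_le_pow_left₀ hb0 (by linarith : 1 - 3 / (4 * (l : ℝ)) ≤ _) (k * a)
    rw [← Real.exp_nat_mul] at h2
    refine h2.trans (le_of_eq ?_)
    push_cast
    congr 1
    ring
  have har := aux_arith ((l : ℝ) - 1) a k (Real.log m) (Real.log n) (Real.log l) l (by linarith)
    (by ring) hk ha (by
      have h4 : Real.log 4 ≤ Real.log m := Real.log_le_log (by norm_num) hmR
      have : Real.log 4 = 2 * Real.log 2 := by
        rw [show (4 : ℝ) = 2 ^ 2 by norm_num, Real.log_pow]; norm_num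
      have := Real.log_two_gt_d9
      linarith) (Real.log_le_log (by linarith) hnR) (Real.log_nonneg (by linarith)) hkp
  have hfin : ((m.choose k : ℕ) : ℝ) * (((n.choose a : ℕ) : ℝ) * Real.exp (Real.log l)) *
      (Real.exp (Real.log 4 * (a * Real.log l)) * (1 - 3 / (4 * (l : ℝ))) ^ (k * a)) < 1 := by
    calc _ ≤ Real.exp (k * Real.log m) * (Real.exp (a * Real.log n) * Real.exp (Real.log l)) *
      (Real.exp (Real.log 4 * (a * Real.log l)) * Real.exp (-(3 / (4 * (l : ℝ)) * (k * a)))) := by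
          gcongr
      _ = Real.exp (k * Real.log m + a * Real.log n + Real.log l + Real.log 4 * (a * Real.log l)
            - 3 / (4 * l) * (k * a)) := by
          rw [← Real.exp_add, ← Real.exp_add, ← Real.exp_add, ← Real.exp_add]
          congr 1
          ring
      _ < 1 := by rwa [Real.exp_lt_one_iff]
  rw [← hc3] at hfin
  have := mul_lt_mul_of_pos_left hfin hP
  nlinarith

/-- Existence of a class of allocations with an `l/(l-1)` approximation ratio for XOS
valuations admitting no large shattered pair. -/
theorem exists_class_xos_approx_no_shattering {X Y : Type*} [Fintype X] [Fintype Y]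
    [DecidableEq Y] (m n l : ℕ) (hm : Fintype.card X = m) (hn : Fintype.card Y = n)
    (hl2 : 2 ≤ l) (hln : l ≤ n) (hdvd : l ∣ n)
    (hcond : (2 * l : ℝ) ≤ 8 * ((l : ℝ) - 1) * Real.log n) :
    ∃ H : Set (X → Y),
      (∀ v : Y → Finset X → ℝ, (∀ y, IsXOS (v y)) →
        ∀ S : Y → Finset X, IsPartitionFam S →
          ∃ f ∈ H, (((l : ℝ) - 1) / (l : ℝ)) * (∑ y : Y, v y (S y)) ≤
            ∑ y : Y, v y (Finset.univ.filter (fun x => f x = y))) ∧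
      ¬ ∃ (S : Finset X) (A : Finset Y),
          8 * ((l : ℝ) - 1) * Real.log n ≤ (S.card : ℝ) ∧
          24 * ((l : ℝ) - 1) * Real.log m < (A.card : ℝ) ∧
          ∀ g : X → Y, (∀ x ∈ S, g x ∈ A) → ∃ f ∈ H, ∀ x ∈ S, f x = g x := by
  classical
  have hlR : (2 : ℝ) ≤ l := by exact_mod_cast hl2
  have hl0 : 0 < l := by omega
  have hYne : Nonempty Y := Fintype.card_pos_iff.1 (by omega)
  obtain ⟨y0⟩ := hYne
  obtain ⟨k, hkdef⟩ : ∃ k : ℕ, k = ⌈8 * ((l : ℝ) - 1) * Real.log n⌉₊ := ⟨_, rfl⟩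
  obtain ⟨a, hadef⟩ : ∃ a : ℕ, a = ⌈23 * ((l : ℝ) - 1) * Real.log m⌉₊ := ⟨_, rfl⟩
  have hk : 8 * ((l : ℝ) - 1) * Real.log n ≤ k := by rw [hkdef]; exact Nat.le_ceil _
  have ha : 23 * ((l : ℝ) - 1) * Real.log m ≤ a := by rw [hadef]; exact Nat.le_ceil _
  have hk4 : 4 ≤ k := by
    have : (4 : ℝ) ≤ k := by linarith
    exact_mod_cast this
  have hex : ∃ c : X × Y → Fin l, 4 ≤ m → ∀ (S : Finset X) (A : Finset Y),
      S.card = k → A.card = a →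
      ∀ i, (a : ℝ) * Real.log l < (((S ×ˢ A).filter (fun z => c z = i)).card : ℝ) := by
    by_cases hm4 : 4 ≤ m
    · obtain ⟨c, hc⟩ := aux_exists m n l k a hm hn hl2 hln hm4
        (by exact_mod_cast (by omega : 0 < k)) hk ha
      exact ⟨c, fun _ => hc⟩
    · exact ⟨fun _ => ⟨0, hl0⟩, fun h => absurd h hm4⟩
  obtain ⟨c, hc⟩ := hex
  refine ⟨{f | ∃ i, ∀ x, f x = y0 ∨ c (x, f x) ≠ i}, ?_, ?_⟩
  · intro v hv S hS
    choose r w hw0 hw using hv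
    choose s hs using hS.2
    have hsS : ∀ x y, x ∈ S y ↔ s x = y := by
      intro x y
      constructor
      · intro hx
        by_contra hne
        exact Finset.disjoint_left.1 (hS.1 _ _ hne) (hs x) hx
      · rintro rfl; exact hs x
    have hj : ∀ y, ∃ j, v y (S y) = ∑ x ∈ S y, w y j x := by
      intro y
      obtain ⟨j, _, hj⟩ := Finset.exists_mem_eq_sup' Finset.univ_nonempty
        (fun j => ∑ x ∈ S y, w y j x)
      exact ⟨j, by rw [hw, hj]⟩
    choose j hj using hj
    have hge : ∀ y T, ∑ x ∈ T, w y (j y) x ≤ v y T := by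
      intro y T
      rw [hw]
      exact Finset.le_sup' (fun j => ∑ x ∈ T, w y j x) (Finset.mem_univ (j y))
    have hopt : ∑ y, v y (S y) = ∑ x, w (s x) (j (s x)) x := by
      have h1 : ∀ y, v y (S y) = ∑ x, if s x = y then w y (j y) x else 0 := by
        intro y
        rw [hj, ← Finset.sum_filter]
        refine Finset.sum_congr ?_ (fun _ _ => rfl)
        ext x; simp [hsS]
      rw [Finset.sum_congr rfl (fun y _ => h1 y), Finset.sum_comm]
      simp
    obtain ⟨F, hF⟩ : ∃ F : Fin l → X → Y, F = fun i x => if c (x, s x) = i then y0 else s x :=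
      ⟨_, rfl⟩
    have hFval : ∀ i, ∑ x, (if c (x, s x) = i then 0 else w (s x) (j (s x)) x) ≤
        ∑ y, v y (Finset.univ.filter (fun x => F i x = y)) := by
      intro i
      refine le_trans ?_ (Finset.sum_le_sum (fun y _ => hge y _))
      have h1 : ∀ y, ∑ x ∈ Finset.univ.filter (fun x => F i x = y), w y (j y) x =
        ∑ x, if F i x = y then w y (j y) x else 0 := fun y => by rw [Finset.sum_filter]
      rw [Finset.sum_congr rfl (fun y _ => h1 y), Finset.sum_comm]
      refine Finset.sum_le_sum (fun x _ => ?_)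
      rw [Finset.sum_ite_eq, if_pos (Finset.mem_univ _)]
      split_ifs with hcx
      · exact hw0 _ _ _
      · have : F i x = s x := by rw [hF]; simp [hcx]
        rw [this]
    have hsum : ∑ i : Fin l, ∑ x, (if c (x, s x) = i then 0 else w (s x) (j (s x)) x) =
        ((l : ℝ) - 1) * ∑ y, v y (S y) := by
      rw [hopt, Finset.sum_comm, Finset.mul_sum]
      refine Finset.sum_congr rfl (fun x _ => ?_)
      have : ∀ i, (if c (x, s x) = i then 0 else w (s x) (j (s x)) x) =
        w (s x) (j (s x)) x - (if c (x, s x) = i then w (s x) (j (s x)) x else 0) := by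
        intro i; split_ifs <;> simp
      simp only [this, Finset.sum_sub_distrib, Finset.sum_ite_eq]
      simp
      ring
    have : Nonempty (Fin l) := ⟨⟨0, hl0⟩⟩
    obtain ⟨i, _, hi⟩ := Finset.exists_le_of_sum_le (s := (Finset.univ : Finset (Fin l)))
      (f := fun _ => (((l : ℝ) - 1) / (l : ℝ)) * (∑ y : Y, v y (S y)))
      (g := fun i => ∑ x, (if c (x, s x) = i then 0 else w (s x) (j (s x)) x))
      Finset.univ_nonempty (by
        rw [hsum, Finset.sum_const, Finset.card_univ, Fintype.card_fin, nsmul_eq_mul]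
        have : (l : ℝ) ≠ 0 := by linarith
        apply le_of_eq
        field_simp)
    refine ⟨F i, ⟨i, fun x => ?_⟩, hi.trans (hFval i)⟩
    by_cases hcx : c (x, s x) = i
    · left; rw [hF]; simp [hcx]
    · right
      have : F i x = s x := by rw [hF]; simp [hcx]
      rw [this]; exact hcx
  · rintro ⟨S, A, hS, hA, hsh⟩
    have hSk : k ≤ S.card := by rw [hkdef]; exact Nat.ceil_le.2 hS
    have hm4 : 4 ≤ m := by
      have := Finset.card_le_univ S
      omega
    have hmR : (4 : ℝ) ≤ m := by exact_mod_cast hm4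
    have hlogm : 1.38 ≤ Real.log m := by
      have h4 : Real.log 4 ≤ Real.log m := Real.log_le_log (by norm_num) hmR
      have : Real.log 4 = 2 * Real.log 2 := by
        rw [show (4 : ℝ) = 2 ^ 2 by norm_num, Real.log_pow]; norm_num
      have := Real.log_two_gt_d9
      linarith
    have hLm : 1 ≤ ((l : ℝ) - 1) * Real.log m := by nlinarith
    have hAa : a ≤ (A.erase y0).card := by
      rw [hadef]
      apply Nat.ceil_le.2
      have h1 := Finset.pred_card_le_card_erase (s := A) (a := y0)
      have h2 : (A.card : ℝ) ≤ (A.erase y0).card + 1 := by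
        have : A.card ≤ (A.erase y0).card + 1 := by omega
        exact_mod_cast this
      linarith
    have ha0 : 0 < a := by
      have : (0 : ℝ) < a := by linarith
      exact_mod_cast this
    obtain ⟨S', hS's, hS'⟩ := Finset.exists_subset_card_eq hSk
    obtain ⟨A', hA's, hA'⟩ := Finset.exists_subset_card_eq hAa
    obtain ⟨g, hgA, hg⟩ := aux_g y0 l hl0 c S' A' (by omega) (by
      rw [hA']; exact hc hm4 S' A' hS' hA')
    obtain ⟨b, hb⟩ := Finset.card_pos.1 (by omega : 0 < A'.card)
    have hAA : ∀ y ∈ A', y ∈ A ∧ y ≠ y0 := fun y hy =>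
      ⟨Finset.mem_of_mem_erase (hA's hy), Finset.ne_of_mem_erase (hA's hy)⟩
    obtain ⟨f, ⟨i, hfi⟩, hfg⟩ := hsh (fun x => if x ∈ S' then g x else b) (by
      intro x _
      show (if x ∈ S' then g x else b) ∈ A
      split_ifs with hx
      · exact (hAA _ (hgA x hx)).1
      · exact (hAA _ hb).1)
    obtain ⟨x, hx, hcx⟩ := hg i
    have h1 := hfg x (hS's hx)
    simp only [if_pos hx] at h1
    rcases hfi x with h | h
    · exact (hAA _ (hgA x hx)).2 (h1 ▸ h)
    · rw [h1] at h; exact h hcx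
end

section
/- Tightness of the generalized Sauer–Shelah bound when k = n: Fix integers m ≥ d ≥ 0 and n ≥ k ≥ 2, and let H ⊆ [n]^{[m]} be the class of all functions f : [m] → [n] such that |{x ∈ [m] : f(x) ≥ k}| ≤ d. Then Dim_k(H) = d and |H| = Σ_{i=0}^{d} C(m, i) · (k−1)^{m−i} · (n+1−k)^i. -/
open Finset

/-- The class of all functions `f : [m] → [n]` taking a value `≥ k` (in the 1-indexed sense:
`(f x).val + 1 ≥ k`) on at most `d` points. -/
def tightClass (m n k d : ℕ) : Finset (Fin m → Fin n) :=
  Finset.univ.filter (fun f : Fin m → Fin n =>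
    (Finset.univ.filter (fun x : Fin m => k ≤ (f x : ℕ) + 1)).card ≤ d)

lemma small_card (n k : ℕ) (hk2 : 2 ≤ k) (hkn : k ≤ n) :
    (univ.filter (fun y : Fin n => ¬ k ≤ (y : ℕ) + 1)).card = k - 1 := by
  have : (univ.filter (fun y : Fin n => ¬ k ≤ (y : ℕ) + 1))
      = (univ : Finset (Fin (k-1))).map (Fin.castLEEmb (by omega)) := by
    ext y
    simp only [mem_filter, mem_univ, true_and, mem_map, Fin.castLEEmb_apply]
    constructor
    · intro h
      exact ⟨⟨y, by omega⟩, by ext; simp⟩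
    · rintro ⟨a, rfl⟩
      have := a.2
      simp only [Fin.val_castLE]
      omega
  rw [this]; simp

lemma big_card (n k : ℕ) (hk2 : 2 ≤ k) (hkn : k ≤ n) :
    (univ.filter (fun y : Fin n => k ≤ (y : ℕ) + 1)).card = n + 1 - k := by
  have h := Finset.card_filter_add_card_filter_not (s := (univ : Finset (Fin n)))
    (fun y : Fin n => k ≤ (y : ℕ) + 1)
  rw [small_card n k hk2 hkn, Finset.card_univ, Fintype.card_fin] at h
  omega

lemma fiber_card (m n k : ℕ) (hk2 : 2 ≤ k) (hkn : k ≤ n) (S : Finset (Fin m)) :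
    (univ.filter (fun f : Fin m → Fin n =>
      univ.filter (fun x : Fin m => k ≤ (f x : ℕ) + 1) = S)).card
      = (k - 1) ^ (m - S.card) * (n + 1 - k) ^ S.card := by
  have : (univ.filter (fun f : Fin m → Fin n =>
      univ.filter (fun x : Fin m => k ≤ (f x : ℕ) + 1) = S))
      = Fintype.piFinset (fun x => if x ∈ S then univ.filter (fun y : Fin n => k ≤ (y : ℕ) + 1)
          else univ.filter (fun y : Fin n => ¬ k ≤ (y : ℕ) + 1)) := by
    ext f
    simp only [mem_filter, mem_univ, true_and, Fintype.mem_piFinset, Finset.ext_iff]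
    refine forall_congr' fun x => ?_
    by_cases hx : x ∈ S <;> simp [hx]
  rw [this, Fintype.card_piFinset]
  have h2 : ∀ x : Fin m, (if x ∈ S then univ.filter (fun y : Fin n => k ≤ (y : ℕ) + 1)
          else univ.filter (fun y : Fin n => ¬ k ≤ (y : ℕ) + 1)).card
      = if x ∈ S then n + 1 - k else k - 1 := by
    intro x
    split_ifs
    · exact big_card n k hk2 hkn
    · exact small_card n k hk2 hkn
  simp only [h2]
  rw [Finset.prod_ite, prod_const, prod_const, mul_comm]
  have e1 : univ.filter (fun x => x ∈ S) = S := by ext; simp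
  have e2 : univ.filter (fun x => x ∉ S) = Sᶜ := by ext; simp
  rw [e1, e2, card_compl, Fintype.card_fin]

lemma tight_card (m d n k : ℕ) (hk2 : 2 ≤ k) (hkn : k ≤ n) :
    (tightClass m n k d).card =
        ∑ i ∈ Finset.range (d + 1), m.choose i * (k - 1) ^ (m - i) * (n + 1 - k) ^ i := by
  rw [Finset.card_eq_sum_card_fiberwise (t := range (d+1))
    (f := fun f : Fin m → Fin n => (univ.filter (fun x : Fin m => k ≤ (f x : ℕ) + 1)).card)]
  · refine sum_congr rfl fun i hi => ?_
    rw [mem_range] at hi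
    rw [Finset.card_eq_sum_card_fiberwise (t := powersetCard i univ)
      (f := fun f : Fin m → Fin n => (univ.filter (fun x : Fin m => k ≤ (f x : ℕ) + 1)))]
    · rw [sum_congr rfl (g := fun _ => (k - 1) ^ (m - i) * (n + 1 - k) ^ i)]
      · simp [mul_assoc]
      · intro S hS
        have hS' := (mem_powersetCard.1 hS).2
        rw [← hS', ← fiber_card m n k hk2 hkn S]
        congr 1
        ext f
        simp only [tightClass, mem_filter, mem_univ, true_and]
        constructor
        · exact fun h => h.2
        · intro h
          rw [h]
          exact ⟨⟨by omega, rfl⟩, rfl⟩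
    · intro f hf
      simp only [coe_filter, Set.mem_ofPred_eq] at hf
      exact mem_coe.2 (mem_powersetCard.2 ⟨subset_univ _, hf.2⟩)
  · intro f hf
    have := (mem_filter.1 (mem_coe.1 hf)).2
    exact mem_coe.2 (mem_range.2 (Nat.lt_succ_of_le this))

/-- Tightness of the generalized Sauer–Shelah bound when `k = n`:
the class of functions taking a value `≥ k` at most `d` times has `k`-dimension `d` and
cardinality `∑_{i=0}^{d} C(m,i) (k-1)^{m-i} (n+1-k)^i`. -/
theorem sauer_gen_tight (m d n k : ℕ) (hdm : d ≤ m) (hk2 : 2 ≤ k) (hkn : k ≤ n) :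
    kDim (tightClass m n k d) k = d ∧
      (tightClass m n k d).card =
        ∑ i ∈ Finset.range (d + 1), m.choose i * (k - 1) ^ (m - i) * (n + 1 - k) ^ i := by
  refine ⟨?_, tight_card m d n k hk2 hkn⟩
  have z : Fin n := ⟨0, by omega⟩
  refine IsGreatest.csSup_eq ⟨?_, ?_⟩
  · obtain ⟨A, -, hA⟩ := exists_subset_card_eq (s := (univ : Finset (Fin m))) (n := d) (by simpa)
    refine ⟨A, ⟨fun _ => univ.map (Fin.castLEEmb hkn), by simp, fun f _ => ?_⟩, hA⟩
    refine ⟨fun x => if x ∈ A then f x else ⟨0, by omega⟩, ?_, fun a ha => by simp [ha]⟩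
    refine mem_filter.2 ⟨mem_univ _, ?_⟩
    rw [← hA]
    refine card_le_card fun x hx => ?_
    by_contra hxA
    have := (mem_filter.1 hx).2
    simp [hxA] at this
    omega
  · rintro e ⟨A, ⟨Ya, hY, hf⟩, rfl⟩
    have key : ∀ a : Fin m, ∃ y : Fin n, a ∈ A → y ∈ Ya a ∧ k ≤ (y : ℕ) + 1 := by
      intro a
      by_cases ha : a ∈ A
      · by_contra! hcon
        have hle : (Ya a).card ≤ k - 1 := by
          rw [← small_card n k hk2 hkn]
          refine card_le_card fun y hy => mem_filter.2 ⟨mem_univ _, ?_⟩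
          exact not_le.2 ((hcon y).2 hy)
        have := hY a ha
        omega
      · exact ⟨z, fun h => absurd h ha⟩
    choose f hf' using key
    obtain ⟨h, hH, hh⟩ := hf f (fun a ha => (hf' a ha).1)
    refine le_trans (card_le_card fun a ha => ?_) (mem_filter.1 hH).2
    refine mem_filter.2 ⟨mem_univ _, ?_⟩
    rw [hh a ha]
    exact (hf' a ha).2
end
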